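/- arXiv:1103.3088 — 2 statements merged into one kernel-verified Lean document; each statement's English description precedes it below -/
import Mathlib

section
/- Stolarsky's invariance principle: Let d ≥ 2 and let x_1, …, x_N be any N points on the unit sphere S^d ⊂ R^{d+1}. Then (1/N²) ∑_{j=1}^N ∑_{k=1}^N |x_j − x_k| + (H_d(S^d)/H_d(B^d)) · [D_{L2,C}(X_N)]² = ∫_{S^d} ∫_{S^d} |x − y| dσ_d(x) dσ_d(y), where H_d(S^d)/H_d(B^d) is the ratio of the surface area of S^d to the volume of the unit ball B^d in R^d. -/
open MeasureTheory Metric Real Filter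
open scoped BigOperators ENNReal NNReal RealInnerProductSpace Topology

noncomputable section

/-- Normalized uniform (surface) probability measure `σ_d` on the unit sphere
`S^d ⊂ ℝ^{d+1}`, defined as normalized `d`-dimensional Hausdorff measure. -/
def sigmaMeasure (d : ℕ) : Measure (EuclideanSpace ℝ (Fin (d + 1))) :=
  (μH[(d : ℝ)] (sphere (0 : EuclideanSpace ℝ (Fin (d + 1))) 1))⁻¹ •
    μH[(d : ℝ)].restrict (sphere (0 : EuclideanSpace ℝ (Fin (d + 1))) 1)

/-- Squared spherical cap `L²` discrepancy of the `N`-point configuration `x` on `S^d`: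
`∫_{-1}^{1} ∫_{S^d} |#{k : x_k ∈ C(y;t)}/N − σ_d(C(y;t))|² dσ_d(y) dt`. -/
def L2DiscSq (d N : ℕ) (x : Fin N → EuclideanSpace ℝ (Fin (d + 1))) : ℝ :=
  ∫ t in Set.Icc (-1 : ℝ) 1, ∫ y,
    ((Nat.card {k : Fin N // t ≤ ⟪y, x k⟫} : ℝ) / N
      - (sigmaMeasure d {z | t ≤ ⟪y, z⟫}).toReal) ^ 2 ∂ sigmaMeasure d

/-- Spherical cap `L²` discrepancy. -/
def L2Disc (d N : ℕ) (x : Fin N → EuclideanSpace ℝ (Fin (d + 1))) : ℝ :=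
  Real.sqrt (L2DiscSq d N x)


open scoped Pointwise

abbrev Eu (n : ℕ) := EuclideanSpace ℝ (Fin n)

/-- Invariance under all linear isometries. -/
def RotInv {d : ℕ} (μ : Measure (Eu (d+1))) : Prop :=
  ∀ L : Eu (d+1) ≃ₗᵢ[ℝ] Eu (d+1), MeasurePreserving L μ μ

def e0 (d : ℕ) : Eu (d+1) := EuclideanSpace.single 0 1

lemma norm_e0 (d : ℕ) : ‖e0 d‖ = 1 := by simp [e0]

lemma inner_e0 {d : ℕ} (z : Eu (d+1)) : ⟪e0 d, z⟫ = z 0 := by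
  simp [e0, EuclideanSpace.inner_single_left]

lemma rot_lintegral {d : ℕ} {μ : Measure (Eu (d+1))} (h : RotInv μ) (f : ℝ → ℝ≥0∞)
    (hf : Measurable f) (v w : Eu (d+1)) (hvw : ‖v‖ = ‖w‖) :
    ∫⁻ z, f ⟪v, z⟫ ∂μ = ∫⁻ z, f ⟪w, z⟫ ∂μ := by
  have h2 := (h (Submodule.reflection (ℝ ∙ (v - w))ᗮ)).lintegral_comp (f := fun z => f ⟪w, z⟫)
    (by fun_prop)
  rw [← h2]
  congr 1; ext z
  conv_lhs => rw [← LinearIsometryEquiv.inner_map_map (Submodule.reflection (ℝ ∙ (v - w))ᗮ) v z,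
    Submodule.reflection_sub hvw]

lemma rotInv_volume (d : ℕ) : RotInv (volume : Measure (Eu (d+1))) :=
  fun L => L.measurePreserving

lemma rotInv_hausdorff (d : ℕ) :
    RotInv ((μH[(d : ℝ)]).restrict (sphere (0 : Eu (d+1)) 1)) := by
  intro L
  have h := (L.toIsometryEquiv.measurePreserving_hausdorffMeasure (d:ℝ)).restrict_preimage
    (s := sphere (0 : Eu (d+1)) 1) (isClosed_sphere.measurableSet)
  have h3 : (L.toIsometryEquiv) ⁻¹' sphere (0 : Eu (d+1)) 1 = sphere (0 : Eu (d+1)) 1 := by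
    ext z; simp
  rw [h3] at h
  exact h

lemma zonal_fubini {d : ℕ} {μ : Measure (Eu (d+1))} [SFinite μ] (h : RotInv μ)
    (hS : ∀ᵐ z ∂μ, ‖z‖ = 1)
    (F : ℝ → ℝ → ℝ≥0∞) (hF : Measurable (Function.uncurry F)) :
    (∫⁻ x : Eu (d+1), F (x 0) ‖x‖) * μ Set.univ
      = ∫⁻ x : Eu (d+1), ∫⁻ z, F (‖x‖ * z 0) ‖x‖ ∂μ := by
  have e1 : ∀ x : Eu (d+1), ∫⁻ z, F (‖x‖ * z 0) ‖x‖ ∂μ = ∫⁻ z, F ⟪x, z⟫ ‖x‖ ∂μ := by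
    intro x
    have := rot_lintegral h (fun a => F a ‖x‖) (hF.comp (f := fun a : ℝ => (a, ‖x‖)) (by fun_prop)) x (‖x‖ • e0 d)
      (by simp [norm_smul, norm_e0])
    rw [this]
    congr 1; ext z
    rw [inner_smul_left, inner_e0]; simp
  simp_rw [e1]
  rw [lintegral_lintegral_swap]
  · have e2 : ∀ᵐ z ∂μ, ∫⁻ x : Eu (d+1), F ⟪x, z⟫ ‖x‖ = ∫⁻ x : Eu (d+1), F (x 0) ‖x‖ := by
      filter_upwards [hS] with z hz
      have h2 := (rotInv_volume d (Submodule.reflection (ℝ ∙ (z - e0 d))ᗮ)).lintegral_comp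
        (f := fun x => F (x 0) ‖x‖) (hF.comp (f := fun x : Eu (d+1) => (x 0, ‖x‖)) (by fun_prop))
      rw [← h2]
      congr 1; ext x
      rw [← inner_e0, LinearIsometryEquiv.norm_map]
      congr 1
      rw [← LinearIsometryEquiv.inner_map_map (Submodule.reflection (ℝ ∙ (z - e0 d))ᗮ) x z,
        Submodule.reflection_sub (by rw [hz, norm_e0]), real_inner_comm]
    rw [lintegral_congr_ae e2, lintegral_const]
  · exact (hF.comp (f := fun p : Eu (d+1) × Eu (d+1) => (⟪p.1, p.2⟫, ‖p.1‖))
      (by fun_prop)).aemeasurable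

def proj {d : ℕ} (x : Eu (d+1)) : Eu d := WithLp.toLp 2 (fun i => x i.succ)
def emk {d : ℕ} (t : ℝ) (y : Eu d) : Eu (d+1) := WithLp.toLp 2 (Fin.cons t (fun i => y i))

@[simp] lemma proj_emk {d : ℕ} (t : ℝ) (y : Eu d) : proj (emk t y) = y := by
  ext i; simp [proj, emk]
@[simp] lemma emk_zero {d : ℕ} (t : ℝ) (y : Eu d) : (emk t y) 0 = t := by
  simp [emk]
lemma emk_proj {d : ℕ} (x : Eu (d+1)) : emk (x 0) (proj x) = x := by
  ext i; refine Fin.cases ?_ (fun i => ?_) i <;> simp [proj, emk]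
lemma norm_sq_split {d : ℕ} (x : Eu (d+1)) : ‖x‖^2 = (x 0)^2 + ‖proj x‖^2 := by
  rw [EuclideanSpace.norm_sq_eq, EuclideanSpace.norm_sq_eq, Fin.sum_univ_succ]
  simp [proj]
lemma proj_sub {d : ℕ} (x y : Eu (d+1)) : proj (x - y) = proj x - proj y := by
  ext i; simp [proj]

lemma mp_split (d : ℕ) : MeasurePreserving (fun x : Eu (d+1) => (x 0, proj x))
    volume (volume.prod volume) := by
  have h1 := PiLp.volume_preserving_ofLp (Fin (d+1))
  have h2 := volume_preserving_piFinSuccAbove (fun _ : Fin (d+1) => ℝ) 0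
  have h3 := PiLp.volume_preserving_toLp (Fin d)
  have h4 := (MeasurePreserving.id (volume : Measure ℝ)).prod h3
  have h5 := h4.comp (h2.comp h1)
  exact h5

/-- Spherical cap around the north pole. -/
def cap (d : ℕ) (s : ℝ) : Set (Eu (d+1)) := {z | z ∈ sphere (0 : Eu (d+1)) 1 ∧ s ≤ z 0}

lemma proj_cap {d : ℕ} {s r : ℝ} (hs : 0 < s) (hr : 0 ≤ r) (h : s^2 + r^2 = 1) :
    closedBall (0 : Eu d) r ⊆ proj '' cap d s := by
  intro y hy
  have hy' : ‖y‖ ≤ r := by simpa using hy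
  have h0 : s^2 ≤ 1 - ‖y‖^2 := by nlinarith [norm_nonneg y]
  refine ⟨emk (√(1 - ‖y‖^2)) y, ⟨?_, ?_⟩, by simp⟩
  · have := norm_sq_split (emk (√(1 - ‖y‖^2)) y)
    rw [proj_emk, emk_zero, Real.sq_sqrt (by nlinarith)] at this
    have h1 : ‖emk (√(1 - ‖y‖^2)) y‖^2 = 1 := by linarith
    simp only [mem_sphere_iff_norm, sub_zero]
    exact (pow_eq_one_iff_of_nonneg (norm_nonneg _) two_ne_zero).1 h1
  · rw [emk_zero]; exact Real.le_sqrt_of_sq_le h0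

lemma cap_subset {d : ℕ} {s r : ℝ} (hs : 0 < s) (hr : 0 ≤ r) (h : s^2 + r^2 = 1) :
    cap d s ⊆ (fun y => emk (√(1 - ‖y‖^2)) y) '' closedBall (0 : Eu d) r := by
  rintro z ⟨hz, hz0⟩
  have hz1 : ‖z‖ = 1 := by simpa using hz
  have := norm_sq_split z
  rw [hz1] at this
  refine ⟨proj z, ?_, ?_⟩
  · simp only [mem_closedBall, dist_zero_right]
    exact abs_le_of_sq_le_sq' (by nlinarith) hr |>.2
  · have h2 : 1 - ‖proj z‖^2 = (z 0)^2 := by linarith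
    simp only [h2]
    rw [Real.sqrt_sq (by linarith), emk_proj]

lemma lip_graph {d : ℕ} {s r : ℝ} (hs : 0 < s) (hr : 0 ≤ r) (h : s^2 + r^2 = 1) :
    LipschitzOnWith (Real.toNNReal (1/s)) (fun y : Eu d => emk (√(1 - ‖y‖^2)) y)
      (closedBall (0 : Eu d) r) := by
  refine LipschitzOnWith.of_dist_le_mul ?_
  intro y hy w hw
  have hy' : ‖y‖ ≤ r := by simpa using hy
  have hw' : ‖w‖ ≤ r := by simpa using hw
  rw [Real.coe_toNNReal _ (by positivity), dist_eq_norm, dist_eq_norm]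
  have hA : s ≤ √(1 - ‖y‖^2) := Real.le_sqrt_of_sq_le (by nlinarith [norm_nonneg y])
  have hB : s ≤ √(1 - ‖w‖^2) := Real.le_sqrt_of_sq_le (by nlinarith [norm_nonneg w])
  have hA2 : √(1 - ‖y‖^2)^2 = 1 - ‖y‖^2 := Real.sq_sqrt (by nlinarith [norm_nonneg y])
  have hB2 : √(1 - ‖w‖^2)^2 = 1 - ‖w‖^2 := Real.sq_sqrt (by nlinarith [norm_nonneg w])
  set A := √(1 - ‖y‖^2)
  set B := √(1 - ‖w‖^2)
  have hs1 := norm_sq_split (emk A y - emk B w)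
  rw [proj_sub, proj_emk, proj_emk] at hs1
  have : (emk A y - emk B w) 0 = A - B := by simp
  rw [this] at hs1
  have hab : |‖y‖ - ‖w‖| ≤ ‖y - w‖ := abs_norm_sub_norm_le y w
  have h3 : |A - B| * (A + B) = |‖y‖ - ‖w‖| * (‖y‖ + ‖w‖) := by
    rw [← abs_of_nonneg (by linarith : 0 ≤ A + B), ← abs_mul,
      ← abs_of_nonneg (by positivity : 0 ≤ ‖y‖ + ‖w‖), ← abs_mul, abs_eq_abs]
    right
    nlinarith
  have h4 : |A - B| * s ≤ r * ‖y - w‖ := by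
    have a1 : |A - B| * (2 * s) ≤ |A - B| * (A + B) :=
      mul_le_mul_of_nonneg_left (by linarith) (abs_nonneg _)
    have a2 : |‖y‖ - ‖w‖| * (‖y‖ + ‖w‖) ≤ ‖y - w‖ * (2 * r) :=
      mul_le_mul hab (by linarith) (by positivity) (by positivity)
    linarith
  have h5 : (A - B)^2 * s^2 ≤ r^2 * ‖y - w‖^2 := by
    rw [← mul_pow, ← sq_abs, abs_mul, abs_of_pos hs, ← mul_pow]
    exact pow_le_pow_left₀ (by positivity) h4 2
  have h6 : (‖emk A y - emk B w‖ * s)^2 ≤ ‖y - w‖^2 := by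
    rw [mul_pow, hs1]; nlinarith
  have h7 := abs_le_of_sq_le_sq' h6 (norm_nonneg _) |>.2
  rw [one_div, inv_mul_eq_div, le_div_iff₀ hs]
  exact h7

instance (d : ℕ) : (μH[(d:ℝ)] : Measure (Eu d)).IsAddHaarMeasure := by
  simpa using MeasureTheory.isAddHaarMeasure_hausdorffMeasure (E := EuclideanSpace ℝ (Fin d))

lemma haus_ball (d : ℕ) {r : ℝ} (hr : 0 ≤ r) : μH[(d:ℝ)] (closedBall (0 : Eu d) r)
    = ENNReal.ofReal (r^d) * μH[(d:ℝ)] (closedBall (0 : Eu d) 1) := by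
  rw [Measure.addHaar_closedBall' _ _ hr]; simp

lemma cap_lower {d : ℕ} {s r : ℝ} (hs : 0 < s) (hr : 0 ≤ r) (h : s^2 + r^2 = 1) :
    ENNReal.ofReal (r^d) * μH[(d:ℝ)] (closedBall (0 : Eu d) 1) ≤ μH[(d:ℝ)] (cap d s) := by
  rw [← haus_ball d hr]
  have hl : LipschitzWith 1 (proj : Eu (d+1) → Eu d) := by
    refine LipschitzWith.of_dist_le_mul fun x y => ?_
    rw [dist_eq_norm, dist_eq_norm, ← proj_sub, NNReal.coe_one, one_mul]
    exact abs_le_of_sq_le_sq' (by nlinarith [norm_sq_split (x - y)]) (norm_nonneg _) |>.2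
  calc _ ≤ μH[(d:ℝ)] (proj '' cap d s) := measure_mono (proj_cap hs hr h)
    _ ≤ _ := by simpa using hl.hausdorffMeasure_image_le (d := d) (by positivity) (cap d s)

lemma cap_upper {d : ℕ} {s r : ℝ} (hs : 0 < s) (hr : 0 ≤ r) (h : s^2 + r^2 = 1) :
    μH[(d:ℝ)] (cap d s) ≤ ENNReal.ofReal ((r/s)^d) * μH[(d:ℝ)] (closedBall (0 : Eu d) 1) := by
  calc _ ≤ _ := measure_mono (cap_subset hs hr h)
    _ ≤ _ := (lip_graph hs hr h).hausdorffMeasure_image_le (d := d) (by positivity)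
    _ = _ := by
      rw [haus_ball d hr, ← mul_assoc]
      congr 1
      rw [ENNReal.rpow_natCast, div_eq_inv_mul r s, mul_pow, ENNReal.ofReal_mul (by positivity),
        ENNReal.ofReal_pow (by positivity), ENNReal.ofReal_pow (by positivity), one_div]
      rfl

lemma sphere_finite (d : ℕ) : μH[(d:ℝ)] (sphere (0 : Eu (d+1)) 1) < ∞ := by
  refine (isCompact_sphere _ _).measure_lt_top_of_nhdsWithin ?_
  intro z hz
  have hz1 : ‖z‖ = 1 := by simpa using hz
  set L := Submodule.reflection (ℝ ∙ (z - e0 d))ᗮ with hL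
  have hLz : L z = e0 d := Submodule.reflection_sub (by rw [hz1, norm_e0])
  refine ⟨L ⁻¹' cap d (3/5), ?_, ?_⟩
  · have : L ⁻¹' {x | 3/5 < x 0} ∈ 𝓝 z := by
      refine IsOpen.mem_nhds ?_ ?_
      · exact (isOpen_lt (by fun_prop) (by fun_prop)).preimage L.continuous
      · simp [hLz, e0]; norm_num
    rw [mem_nhdsWithin_iff_exists_mem_nhds_inter]
    refine ⟨_, this, ?_⟩
    rintro w ⟨hw1, hw2⟩
    refine ⟨?_, le_of_lt hw1⟩
    simpa using hw2
  · have := L.toIsometryEquiv.hausdorffMeasure_preimage (d:ℝ) (cap d (3/5))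
    have h2 : μH[(d:ℝ)] (L ⁻¹' cap d (3/5)) = μH[(d:ℝ)] (cap d (3/5)) := this
    rw [h2]
    refine (cap_upper (r := 4/5) (by norm_num) (by norm_num) (by norm_num)).trans_lt ?_
    exact ENNReal.mul_lt_top (by simp) (isCompact_closedBall _ _).measure_lt_top

lemma ball_pos (d : ℕ) : 0 < μH[(d:ℝ)] (closedBall (0 : Eu d) 1) :=
  measure_closedBall_pos _ _ one_pos

lemma ball_fin (d : ℕ) : μH[(d:ℝ)] (closedBall (0 : Eu d) 1) < ∞ :=
  (isCompact_closedBall _ _).measure_lt_top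

lemma sphere_pos (d : ℕ) : 0 < μH[(d:ℝ)] (sphere (0 : Eu (d+1)) 1) := by
  have h := cap_lower (d := d) (s := 3/5) (r := 4/5) (by norm_num) (by norm_num) (by norm_num)
  refine lt_of_lt_of_le (ENNReal.mul_pos ?_ (ball_pos d).ne') (h.trans (measure_mono fun z hz => hz.1))
  simp

lemma meas_and {α : Type*} [MeasurableSpace α] {p q : α → Prop} (hp : MeasurableSet {x | p x})
    (hq : MeasurableSet {x | q x}) : MeasurableSet {x | p x ∧ q x} := by
  have : {x | p x ∧ q x} = {x | p x} ∩ {x | q x} := by ext; simp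
  rw [this]; exact hp.inter hq

def coneU (d : ℕ) (k : ℝ) : Set (Eu (d+1)) := {x | 0 < x 0 ∧ x 0 ≤ 1 ∧ ‖proj x‖ ≤ x 0 * k}

lemma vol_coneU (d : ℕ) {k : ℝ} (hk : 0 ≤ k) :
    volume (coneU d k) = ENNReal.ofReal (k^d / (d+1)) * volume (closedBall (0 : Eu d) 1) := by
  let T : Set (ℝ × Eu d) := {p | 0 < p.1 ∧ p.1 ≤ 1 ∧ ‖p.2‖ ≤ p.1 * k}
  have hT : MeasurableSet T := by
    exact meas_and (measurableSet_lt (by fun_prop) (by fun_prop))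
      (meas_and (measurableSet_le (by fun_prop) (by fun_prop))
        (measurableSet_le (by fun_prop) (by fun_prop)))
  have h1 := (mp_split d).measure_preimage hT.nullMeasurableSet
  have h2 : (fun x : Eu (d+1) => (x 0, proj x)) ⁻¹' T = coneU d k := rfl
  rw [h2] at h1
  rw [h1, Measure.prod_apply hT]
  have h3 : ∀ t : ℝ, volume (Prod.mk t ⁻¹' T) = (Set.Ioc (0:ℝ) 1).indicator
      (fun t => ENNReal.ofReal ((t*k)^d) * volume (closedBall (0 : Eu d) 1)) t := by
    intro t
    by_cases ht : t ∈ Set.Ioc (0:ℝ) 1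
    · rw [Set.indicator_of_mem ht]
      have : Prod.mk t ⁻¹' T = closedBall (0 : Eu d) (t*k) := by
        ext y; simp [T, ht.1, ht.2]
      rw [this, Measure.addHaar_closedBall' _ _ (mul_nonneg ht.1.le hk)]
      simp
    · rw [Set.indicator_of_notMem ht]
      have : Prod.mk t ⁻¹' T = ∅ := by
        ext y
        simp only [T, Set.mem_preimage, Set.mem_ofPred_eq, Set.mem_empty_iff_false, iff_false]
        intro h; exact ht ⟨h.1, h.2.1⟩
      rw [this]; simp
  simp_rw [h3]
  rw [lintegral_indicator measurableSet_Ioc, lintegral_mul_const _ (by fun_prop)]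
  congr 1
  rw [← ofReal_integral_eq_lintegral_ofReal]
  · congr 1
    rw [← intervalIntegral.integral_of_le (by norm_num)]
    simp_rw [mul_pow]
    rw [intervalIntegral.integral_mul_const, integral_pow]
    simp; field_simp
  · have : Continuous (fun t : ℝ => (t*k)^d) := by fun_prop
    exact (this.intervalIntegrable 0 1).1
  · filter_upwards [ae_restrict_mem measurableSet_Ioc] with t ht
    exact pow_nonneg (mul_nonneg ht.1.le hk) _

def cone (d : ℕ) (s : ℝ) : Set (Eu (d+1)) := {x | s * ‖x‖ ≤ x 0 ∧ ‖x‖ ≤ 1}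

lemma cone_sub {d : ℕ} {s r : ℝ} (hs : 0 < s) (hr : 0 ≤ r) (h : s^2 + r^2 = 1) :
    cone d s ⊆ insert 0 (coneU d (r/s)) := by
  rintro x ⟨h1, h2⟩
  by_cases hx : x = 0
  · exact Or.inl hx
  right
  have hx' : 0 < ‖x‖ := norm_pos_iff.2 hx
  have h0 : 0 < x 0 := lt_of_lt_of_le (by positivity) h1
  have hsp := norm_sq_split x
  refine ⟨h0, ?_, ?_⟩
  · nlinarith [sq_nonneg ‖proj x‖]
  · rw [mul_div_assoc', le_div_iff₀ hs]
    refine abs_le_of_sq_le_sq' ?_ (by positivity) |>.2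
    have : s^2 * ‖x‖^2 ≤ (x 0)^2 := by
      rw [← mul_pow]; exact pow_le_pow_left₀ (by positivity) h1 2
    nlinarith

lemma cone_sup {d : ℕ} {s r : ℝ} (hs : 0 < s) (hr : 0 ≤ r) (h : s^2 + r^2 = 1) :
    s • coneU d (r/s) ⊆ cone d s := by
  rintro _ ⟨x, ⟨h1, h2, h3⟩, rfl⟩
  rw [mul_div_assoc', le_div_iff₀ hs] at h3
  have hsp := norm_sq_split x
  have h4 : (‖proj x‖ * s)^2 ≤ (x 0 * r)^2 := pow_le_pow_left₀ (by positivity) h3 2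
  have h5 : (s * ‖x‖)^2 ≤ (x 0)^2 := by nlinarith
  have h6 : s * ‖x‖ ≤ x 0 := abs_le_of_sq_le_sq' h5 h1.le |>.2
  simp only [cone, Set.mem_ofPred_eq, norm_smul, Real.norm_eq_abs, abs_of_pos hs, PiLp.smul_apply,
    smul_eq_mul]
  exact ⟨mul_le_mul_of_nonneg_left h6 hs.le, h6.trans h2⟩

lemma vol_cone_le {d : ℕ} {s r : ℝ} (hs : 0 < s) (hr : 0 ≤ r) (h : s^2 + r^2 = 1) :
    volume (cone d s) ≤ ENNReal.ofReal ((r/s)^d / (d+1)) * volume (closedBall (0 : Eu d) 1) := by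
  rw [← vol_coneU d (by positivity)]
  refine (measure_mono (cone_sub hs hr h)).trans ?_
  rw [Set.insert_eq]
  refine (measure_union_le _ _).trans ?_
  simp

lemma le_vol_cone {d : ℕ} {s r : ℝ} (hs : 0 < s) (hr : 0 ≤ r) (h : s^2 + r^2 = 1) :
    ENNReal.ofReal (s^(d+1) * ((r/s)^d / (d+1))) * volume (closedBall (0 : Eu d) 1)
      ≤ volume (cone d s) := by
  refine le_trans ?_ (measure_mono (cone_sup hs hr h))
  rw [Measure.addHaar_smul, vol_coneU d (by positivity), ← mul_assoc,
    ENNReal.ofReal_mul (by positivity)]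
  simp [abs_of_pos hs]

/-- Hausdorff measure on the sphere. -/
def muS (d : ℕ) : Measure (Eu (d+1)) := (μH[(d : ℝ)]).restrict (sphere (0 : Eu (d+1)) 1)

instance (d : ℕ) : IsFiniteMeasure (muS d) := by
  refine ⟨?_⟩
  rw [muS, Measure.restrict_apply_univ]
  exact sphere_finite d

lemma muS_univ (d : ℕ) : muS d Set.univ = μH[(d:ℝ)] (sphere (0 : Eu (d+1)) 1) := by
  rw [muS, Measure.restrict_apply_univ]

lemma muS_ae (d : ℕ) : ∀ᵐ z ∂(muS d), ‖z‖ = 1 := by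
  filter_upwards [ae_restrict_mem isClosed_sphere.measurableSet] with z hz
  simpa using hz

lemma cone_fubini (d : ℕ) (s : ℝ) :
    volume (cone d s) * μH[(d:ℝ)] (sphere (0 : Eu (d+1)) 1)
      = μH[(d:ℝ)] (cap d s) * volume (closedBall (0 : Eu (d+1)) 1) := by
  let Q : Set (ℝ × ℝ) := {p | s * p.2 ≤ p.1 ∧ p.2 ≤ 1}
  have hQ : MeasurableSet Q := meas_and (measurableSet_le (by fun_prop) (by fun_prop))
        (measurableSet_le (by fun_prop) (by fun_prop))
  have h := zonal_fubini (μ := muS d) (rotInv_hausdorff d) (muS_ae d) (fun a b => Q.indicator 1 (a, b))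
    (measurable_one.indicator hQ)
  have hm : MeasurableSet (cone d s) := meas_and (measurableSet_le (by fun_prop) (by fun_prop))
        (measurableSet_le (by fun_prop) (by fun_prop))
  have e1 : ∫⁻ x : Eu (d+1), Q.indicator (1 : ℝ × ℝ → ℝ≥0∞) (x 0, ‖x‖) = volume (cone d s) := by
    rw [← lintegral_indicator_one hm]; rfl
  have e3 : MeasurableSet {z : Eu (d+1) | s ≤ z 0} := measurableSet_le (by fun_prop) (by fun_prop)
  have e4 : muS d {z | s ≤ z 0} = μH[(d:ℝ)] (cap d s) := by
    rw [muS, Measure.restrict_apply e3, Set.inter_comm]; rfl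
  have e2 : ∀ᵐ x : Eu (d+1), ∫⁻ z, Q.indicator (1 : ℝ × ℝ → ℝ≥0∞) (‖x‖ * z 0, ‖x‖) ∂(muS d)
      = (closedBall (0 : Eu (d+1)) 1).indicator (fun _ => μH[(d:ℝ)] (cap d s)) x := by
    have : ∀ᵐ x : Eu (d+1), x ≠ 0 := by
      simp [ae_iff]
    filter_upwards [this] with x hx
    have hx' : 0 < ‖x‖ := norm_pos_iff.2 hx
    by_cases h1 : x ∈ closedBall (0 : Eu (d+1)) 1
    · rw [Set.indicator_of_mem h1, ← e4, ← lintegral_indicator_one e3]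
      congr 1; ext z
      have h1' : ‖x‖ ≤ 1 := by simpa using h1
      have : (‖x‖ * z 0, ‖x‖) ∈ Q ↔ z ∈ {z : Eu (d+1) | s ≤ z 0} := by
        simp only [Q, Set.mem_ofPred_eq, h1', and_true]
        rw [mul_comm s, mul_le_mul_iff_right₀ hx']
      by_cases h2 : z ∈ {z : Eu (d+1) | s ≤ z 0}
      · rw [Set.indicator_of_mem h2, Set.indicator_of_mem (this.2 h2)]; rfl
      · rw [Set.indicator_of_notMem h2, Set.indicator_of_notMem (fun h => h2 (this.1 h))]
    · rw [Set.indicator_of_notMem h1]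
      have : ∀ z : Eu (d+1), Q.indicator (1 : ℝ × ℝ → ℝ≥0∞) (‖x‖ * z 0, ‖x‖) = 0 := by
        intro z
        refine Set.indicator_of_notMem (fun h2 => h1 ?_) _
        simpa using h2.2
      simp [this]
  have e5 : (∫⁻ x : Eu (d+1), Q.indicator (1 : ℝ × ℝ → ℝ≥0∞) (x 0, ‖x‖)) * muS d Set.univ
      = ∫⁻ x : Eu (d+1), ∫⁻ z, Q.indicator (1 : ℝ × ℝ → ℝ≥0∞) (‖x‖ * z 0, ‖x‖) ∂(muS d) := h
  rw [e1, muS_univ, lintegral_congr_ae e2, lintegral_indicator isClosed_closedBall.measurableSet,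
    setLIntegral_const] at e5
  exact e5

def HS (d : ℕ) : ℝ := (μH[(d:ℝ)] (sphere (0 : Eu (d+1)) 1)).toReal
def HB (d : ℕ) : ℝ := (μH[(d:ℝ)] (closedBall (0 : Eu d) 1)).toReal
def vB (d : ℕ) : ℝ := (volume (closedBall (0 : Eu d) 1)).toReal

lemma HS_pos (d : ℕ) : 0 < HS d := ENNReal.toReal_pos (sphere_pos d).ne' (sphere_finite d).ne
lemma HB_pos (d : ℕ) : 0 < HB d := ENNReal.toReal_pos (ball_pos d).ne' (ball_fin d).ne
lemma vB_fin (d : ℕ) : volume (closedBall (0 : Eu d) 1) < ∞ :=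
  (isCompact_closedBall _ _).measure_lt_top
lemma vB_pos (d : ℕ) : 0 < vB d :=
  ENNReal.toReal_pos (measure_closedBall_pos _ _ one_pos).ne' (vB_fin d).ne

lemma key_bounds {d : ℕ} {s r : ℝ} (hs : 0 < s) (hr : 0 < r) (h : s^2 + r^2 = 1) :
    s^(d+1) * (vB d / (d+1) * HS d) ≤ HB d * vB (d+1) ∧
    s^d * (HB d * vB (d+1)) ≤ vB d / (d+1) * HS d := by
  have f := congrArg ENNReal.toReal (cone_fubini d s)
  rw [ENNReal.toReal_mul, ENNReal.toReal_mul] at f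
  change _ * HS d = _ * vB (d+1) at f
  have fin1 : ENNReal.ofReal ((r/s)^d / (d+1)) * volume (closedBall (0 : Eu d) 1) ≠ ∞ :=
    (ENNReal.mul_lt_top (by simp) (vB_fin d)).ne
  have fin2 : ENNReal.ofReal ((r/s)^d) * μH[(d:ℝ)] (closedBall (0 : Eu d) 1) ≠ ∞ :=
    (ENNReal.mul_lt_top (by simp) (ball_fin d)).ne
  have a1 := ENNReal.toReal_mono fin1 (vol_cone_le hs hr.le h)
  have a2 := ENNReal.toReal_mono (ne_top_of_le_ne_top fin1 (vol_cone_le hs hr.le h))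
    (le_vol_cone hs hr.le h)
  have a3 := ENNReal.toReal_mono fin2 (cap_upper hs hr.le h)
  have a4 := ENNReal.toReal_mono (ne_top_of_le_ne_top fin2 (cap_upper hs hr.le h))
    (cap_lower hs hr.le h)
  rw [ENNReal.toReal_mul, ENNReal.toReal_ofReal (by positivity)] at a1 a2 a3 a4
  change _ ≤ _ * vB d at a1
  change _ * vB d ≤ _ at a2
  change _ ≤ _ * HB d at a3
  change _ * HB d ≤ _ at a4
  have hk : 0 < (r/s)^d := by positivity
  have hrs : r^d = (r/s)^d * s^d := by rw [← mul_pow, div_mul_cancel₀ _ hs.ne']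
  rw [hrs] at a4
  have b1 := mul_le_mul_of_nonneg_right a1 (HS_pos d).le
  have b2 := mul_le_mul_of_nonneg_right a2 (HS_pos d).le
  have b3 := mul_le_mul_of_nonneg_right a3 (vB_pos (d+1)).le
  have b4 := mul_le_mul_of_nonneg_right a4 (vB_pos (d+1)).le
  constructor
  · refine le_of_mul_le_mul_left ?_ hk
    calc _ = _ := by ring
      _ ≤ _ := b2
      _ = _ := f
      _ ≤ _ := b3
      _ = _ := by ring
  · refine le_of_mul_le_mul_left ?_ hk
    calc _ = _ := by ring
      _ ≤ _ := b4
      _ = _ := f.symm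
      _ ≤ _ := b1
      _ = _ := by ring

lemma key_eq (d : ℕ) : vB d / (d+1) * HS d = HB d * vB (d+1) := by
  have hb : ∀ᶠ s in 𝓝[<] (1:ℝ), s^(d+1) * (vB d / (d+1) * HS d) ≤ HB d * vB (d+1) ∧
      s^d * (HB d * vB (d+1)) ≤ vB d / (d+1) * HS d := by
    have : Set.Ioo (0:ℝ) 1 ∈ 𝓝[<] (1:ℝ) := Ioo_mem_nhdsLT (by norm_num)
    filter_upwards [this] with s hs
    have h1 : 0 < 1 - s^2 := by nlinarith [hs.1, hs.2]
    exact key_bounds hs.1 (Real.sqrt_pos.2 h1) (by rw [Real.sq_sqrt h1.le]; ring)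
  have ht : ∀ (n : ℕ) (c : ℝ), Tendsto (fun s : ℝ => s^n * c) (𝓝[<] 1) (𝓝 c) := by
    intro n c
    have : Continuous (fun s : ℝ => s^n * c) := by fun_prop
    simpa using (this.tendsto 1).mono_left nhdsWithin_le_nhds
  exact le_antisymm (le_of_tendsto (ht _ _) (hb.mono fun _ h => h.1))
    (le_of_tendsto (ht _ _) (hb.mono fun _ h => h.2))

lemma rad_int (m : ℕ) : ∫ y in Set.Ioi (0:ℝ), y^m * rexp (-y^2) = 1/2 * Real.Gamma ((m+1)/2) := by
  have h := integral_rpow_mul_exp_neg_rpow (p := 2) (q := m) (by norm_num)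
    (by have : (0:ℝ) ≤ m := by positivity
        linarith)
  rw [← h]
  congr 1; ext y
  rw [Real.rpow_natCast, Real.rpow_two]

lemma vB_ball (n : ℕ) : (volume : Measure (Eu n)).real (ball 0 1) = vB n := by
  rw [vB, Measure.addHaar_unitClosedBall_eq_addHaar_unitBall]; rfl

lemma gauss1 (d : ℕ) (hd : 1 ≤ d) :
    ∫⁻ y : Eu d, ENNReal.ofReal (rexp (-‖y‖^2)) = ENNReal.ofReal (vB d * Real.Gamma (d/2 + 1)) := by
  have : Nontrivial (Eu d) := by
    have : Nonempty (Fin d) := ⟨⟨0, hd⟩⟩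
    infer_instance
  have hd' : (0:ℝ) < d := by exact_mod_cast hd
  have h := integral_fun_norm_addHaar (volume : Measure (Eu d)) (fun y => rexp (-y^2))
  simp only [smul_eq_mul, nsmul_eq_mul, finrank_euclideanSpace_fin] at h
  rw [rad_int, vB_ball, Nat.cast_sub hd, Nat.cast_one, sub_add_cancel] at h
  have h2 : ∫ y : Eu d, rexp (-‖y‖^2) = vB d * Real.Gamma (d/2 + 1) := by
    rw [h, Real.Gamma_add_one (by positivity)]; ring
  have hne : ∫ y : Eu d, rexp (-‖y‖^2) ≠ 0 := by
    rw [h2]; exact (mul_pos (vB_pos d) (Real.Gamma_pos_of_pos (by positivity))).ne'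
  rw [← h2, ofReal_integral_eq_lintegral_ofReal (Integrable.of_integral_ne_zero hne)
    (Eventually.of_forall fun y => (Real.exp_pos _).le)]

lemma gauss2 (d : ℕ) :
    ∫⁻ y : Eu (d+1), ENNReal.ofReal (‖y‖ * rexp (-‖y‖^2))
      = ENNReal.ofReal ((d+1) * vB (d+1) * (1/2 * Real.Gamma (d/2 + 1))) := by
  have h := integral_fun_norm_addHaar (volume : Measure (Eu (d+1))) (fun y => y * rexp (-y^2))
  simp only [smul_eq_mul, nsmul_eq_mul, finrank_euclideanSpace_fin, Nat.add_sub_cancel] at h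
  simp_rw [← mul_assoc, ← pow_succ] at h
  rw [rad_int, vB_ball] at h
  have h2 : ∫ y : Eu (d+1), ‖y‖ * rexp (-‖y‖^2)
      = (d+1) * vB (d+1) * (1/2 * Real.Gamma (d/2 + 1)) := by
    rw [h]; push_cast
    rw [show ((d:ℝ)+1+1)/2 = d/2+1 by ring]
  have hne : ∫ y : Eu (d+1), ‖y‖ * rexp (-‖y‖^2) ≠ 0 := by
    rw [h2]
    have := vB_pos (d+1)
    have := Real.Gamma_pos_of_pos (s := (d:ℝ)/2+1) (by positivity)
    positivity
  rw [← h2, ofReal_integral_eq_lintegral_ofReal (Integrable.of_integral_ne_zero hne)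
    (Eventually.of_forall fun y => by positivity)]

lemma gauss3 : ∫⁻ t : ℝ, ENNReal.ofReal (|t| * rexp (-t^2)) = 1 := by
  have h2 : ∫ t : ℝ, |t| * rexp (-t^2) = 1 := by
    have := integral_comp_abs (f := fun t => t * rexp (-t^2))
    simp only [sq_abs] at this
    rw [this]
    have := rad_int 1
    simp only [pow_one] at this
    rw [this]; norm_num
  have hne : ∫ t : ℝ, |t| * rexp (-t^2) ≠ 0 := by rw [h2]; norm_num
  rw [← ofReal_integral_eq_lintegral_ofReal (Integrable.of_integral_ne_zero hne)
    (Eventually.of_forall fun y => by positivity), h2]; simp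

lemma gauss4 (d : ℕ) (hd : 1 ≤ d) :
    ∫⁻ x : Eu (d+1), ENNReal.ofReal (|x 0| * rexp (-‖x‖^2))
      = ENNReal.ofReal (vB d * Real.Gamma (d/2 + 1)) := by
  have h := (mp_split d).lintegral_comp (f := fun p : ℝ × Eu d =>
    ENNReal.ofReal (|p.1| * rexp (-p.1^2)) * ENNReal.ofReal (rexp (-‖p.2‖^2))) (by fun_prop)
  have hp : ∫⁻ p : ℝ × Eu d, ENNReal.ofReal (|p.1| * rexp (-p.1^2)) *
      ENNReal.ofReal (rexp (-‖p.2‖^2)) ∂(volume.prod volume)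
      = ENNReal.ofReal (vB d * Real.Gamma (d/2 + 1)) := by
    rw [lintegral_prod_mul (f := fun t : ℝ => ENNReal.ofReal (|t| * rexp (-t^2)))
      (g := fun y : Eu d => ENNReal.ofReal (rexp (-‖y‖^2))) (by fun_prop) (by fun_prop),
      gauss3, gauss1 d hd, one_mul]
  rw [← h.trans hp]
  congr 1; ext x
  rw [← ENNReal.ofReal_mul (by positivity), mul_assoc, ← Real.exp_add, norm_sq_split x]
  congr 4; ring

lemma J_eq (d : ℕ) (hd : 1 ≤ d) :
    ∫⁻ z, ENNReal.ofReal |z 0| ∂(muS d) = ENNReal.ofReal (2 * HB d) := by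
  have h := zonal_fubini (μ := muS d) (rotInv_hausdorff d) (muS_ae d)
    (fun a b => ENNReal.ofReal (|a| * rexp (-b^2))) (by fun_prop)
  rw [gauss4 d hd, muS_univ] at h
  have e : ∀ x : Eu (d+1), ∫⁻ z, ENNReal.ofReal (|‖x‖ * z 0| * rexp (-‖x‖^2)) ∂(muS d)
      = ENNReal.ofReal (‖x‖ * rexp (-‖x‖^2)) * ∫⁻ z, ENNReal.ofReal |z 0| ∂(muS d) := by
    intro x
    rw [← lintegral_const_mul _ (by fun_prop)]
    congr 1; ext z
    rw [← ENNReal.ofReal_mul (by positivity), abs_mul, abs_norm]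
    congr 1; ring
  simp_rw [e] at h
  rw [lintegral_mul_const _ (by fun_prop), gauss2] at h
  have hG := Real.Gamma_pos_of_pos (s := (d:ℝ)/2+1) (by positivity)
  have hv := vB_pos (d+1)
  have hv0 := vB_pos d
  have hfin : ∫⁻ z, ENNReal.ofReal |z 0| ∂(muS d) ≠ ∞ := by
    intro h0
    rw [h0, ENNReal.mul_top] at h
    · exact (ENNReal.mul_lt_top (by simp) (sphere_finite d)).ne h
    · simp only [ne_eq, ENNReal.ofReal_eq_zero, not_le]; positivity
  have hr := congrArg ENNReal.toReal h
  rw [ENNReal.toReal_mul, ENNReal.toReal_mul, ENNReal.toReal_ofReal (by positivity),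
    ENNReal.toReal_ofReal (by positivity)] at hr
  change _ * HS d = _ at hr
  rw [← ENNReal.ofReal_toReal hfin]
  congr 1
  have k := key_eq d
  rw [div_mul_eq_mul_div, div_eq_iff (by positivity)] at k
  refine mul_left_cancel₀ (a := (d+1) * vB (d+1) * (1/2 * Real.Gamma (d/2 + 1))) (by positivity) ?_
  rw [← hr]
  linear_combination (Real.Gamma (d/2+1)) * k

lemma sigma_eq (d : ℕ) : sigmaMeasure d = (muS d Set.univ)⁻¹ • muS d := by
  rw [muS_univ]; rfl

instance (d : ℕ) : IsProbabilityMeasure (sigmaMeasure d) := by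
  refine ⟨?_⟩
  rw [sigma_eq, Measure.smul_apply, smul_eq_mul, ENNReal.inv_mul_cancel]
  · rw [muS_univ]; exact (sphere_pos d).ne'
  · exact measure_ne_top _ _

lemma rotInv_sigma (d : ℕ) : RotInv (sigmaMeasure d) := by
  intro L
  rw [sigma_eq]
  exact (rotInv_hausdorff d L).smul_measure _

lemma sigma_ae (d : ℕ) : ∀ᵐ z ∂(sigmaMeasure d), ‖z‖ = 1 := by
  rw [sigma_eq]
  exact Measure.ae_smul_measure (muS_ae d) _

lemma sigma_abs (d : ℕ) (hd : 1 ≤ d) (v : Eu (d+1)) :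
    ∫ z, |⟪v, z⟫| ∂(sigmaMeasure d) = ‖v‖ * (2 * HB d / HS d) := by
  have hB := HB_pos d
  have hS := HS_pos d
  have h := rot_lintegral (rotInv_sigma d) (fun a => ENNReal.ofReal |a|) (by fun_prop) v
    (‖v‖ • e0 d) (by simp [norm_smul, norm_e0])
  rw [integral_eq_lintegral_of_nonneg_ae (Eventually.of_forall fun z => abs_nonneg _)
    (by fun_prop), h]
  have h2 : ∀ z, ENNReal.ofReal |⟪‖v‖ • e0 d, z⟫| = ENNReal.ofReal ‖v‖ * ENNReal.ofReal |z 0| := by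
    intro z
    rw [real_inner_smul_left, inner_e0, abs_mul, abs_norm, ENNReal.ofReal_mul (norm_nonneg _)]
  simp_rw [h2]
  rw [lintegral_const_mul _ (by fun_prop), sigma_eq, lintegral_smul_measure, J_eq d hd, muS_univ,
    ENNReal.toReal_mul, smul_eq_mul, ENNReal.toReal_mul, ENNReal.toReal_inv,
    ENNReal.toReal_ofReal (norm_nonneg _), ENNReal.toReal_ofReal (by positivity)]
  change _ * ((HS d)⁻¹ * _) = _
  field_simp

lemma sigma_lin (d : ℕ) (v : Eu (d+1)) : ∫ z, ⟪v, z⟫ ∂(sigmaMeasure d) = 0 := by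
  have h := (rotInv_sigma d (LinearIsometryEquiv.neg ℝ)).integral_comp
    (LinearIsometryEquiv.neg ℝ (E := Eu (d+1))).toHomeomorph.measurableEmbedding (fun z => ⟪v, z⟫)
  simp only [LinearIsometryEquiv.coe_neg, inner_neg_right] at h
  rw [integral_neg] at h
  linarith

lemma inner_abs_le {d : ℕ} {v z : Eu (d+1)} (hv : ‖v‖ = 1) (hz : ‖z‖ = 1) : |⟪v, z⟫| ≤ 1 := by
  have := abs_real_inner_le_norm v z
  rwa [hv, hz, one_mul] at this

lemma sigma_min (d : ℕ) (hd : 1 ≤ d) (v w : Eu (d+1)) :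
    ∫ z, (min ⟪v, z⟫ ⟪w, z⟫ + 1) ∂(sigmaMeasure d) = 1 - HB d / HS d * dist v w := by
  have hi : ∀ u : Eu (d+1), Integrable (fun z => ⟪u, z⟫) (sigmaMeasure d) := by
    intro u
    refine Integrable.of_bound (C := ‖u‖) (by fun_prop) ?_
    filter_upwards [sigma_ae d] with z hz
    have := norm_inner_le_norm (𝕜 := ℝ) u z
    rwa [hz, mul_one] at this
  have h1 : ∀ z, min ⟪v, z⟫ ⟪w, z⟫ + 1 = (1/2) * ⟪v, z⟫ + (1/2) * ⟪w, z⟫ - (1/2) * |⟪v - w, z⟫| + 1 := by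
    intro z
    rw [inner_sub_left]
    rcases le_total (⟪v, z⟫ : ℝ) ⟪w, z⟫ with h | h
    · rw [min_eq_left h, abs_of_nonpos (by linarith)]; ring
    · rw [min_eq_right h, abs_of_nonneg (by linarith)]; ring
  simp_rw [h1]
  have i1 := (hi v).const_mul (1/2)
  have i2 := (hi w).const_mul (1/2)
  have i3 := (hi (v - w)).abs.const_mul (1/2)
  have i4 : Integrable (fun z => 1 / 2 * ⟪v, z⟫ + 1 / 2 * ⟪w, z⟫) (sigmaMeasure d) := i1.add i2
  have i5 : Integrable (fun z => 1 / 2 * ⟪v, z⟫ + 1 / 2 * ⟪w, z⟫ - 1 / 2 * |⟪v - w, z⟫|)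
    (sigmaMeasure d) := i4.sub i3
  rw [integral_add i5 (integrable_const _), integral_sub i4 i3,
    integral_add i1 i2, integral_const_mul, integral_const_mul, integral_const_mul, sigma_lin,
    sigma_lin, sigma_abs d hd, dist_eq_norm]
  simp; ring

lemma meas_cap_inner {d : ℕ} (t : ℝ) (y : Eu (d+1)) : MeasurableSet {z : Eu (d+1) | t ≤ ⟪y, z⟫} :=
  measurableSet_le (by fun_prop) (by fun_prop)

lemma cap_meas (d : ℕ) (t : ℝ) (v w : Eu (d+1)) (h : ‖v‖ = ‖w‖) :
    (sigmaMeasure d).real {z | t ≤ ⟪v, z⟫} = (sigmaMeasure d).real {z | t ≤ ⟪w, z⟫} := by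
  have := rot_lintegral (rotInv_sigma d) ((Set.Ici t).indicator 1)
    (measurable_one.indicator measurableSet_Ici) v w h
  have e : ∀ v, ∫⁻ z, (Set.Ici t).indicator (1 : ℝ → ℝ≥0∞) ⟪v, z⟫ ∂(sigmaMeasure d)
      = (sigmaMeasure d) {z | t ≤ ⟪v, z⟫} := by
    intro v
    rw [← lintegral_indicator_one (meas_cap_inner t v)]; rfl
  rw [e, e] at this
  simp [Measure.real, this]

lemma meas_real {d : ℕ} (ν : Measure (Eu (d+1))) [IsProbabilityMeasure ν] :
    Measurable (fun q : ℝ × Eu (d+1) => ν.real {z | q.1 ≤ ⟪q.2, z⟫}) := by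
  have hs : MeasurableSet {p : (ℝ × Eu (d+1)) × Eu (d+1) | p.1.1 ≤ ⟪p.1.2, p.2⟫} :=
    measurableSet_le (by fun_prop) (by fun_prop)
  exact (measurable_measure_prodMk_left (ν := ν) hs).ennreal_toReal

def tau : Measure ℝ := volume.restrict (Set.Icc (-1) 1)
instance : IsFiniteMeasure tau := by unfold tau; infer_instance

lemma int_sq {d : ℕ} (ν : Measure (Eu (d+1))) [IsProbabilityMeasure ν] :
    Integrable (fun q : ℝ × Eu (d+1) => (ν.real {z | q.1 ≤ ⟪q.2, z⟫})^2)
      (tau.prod (sigmaMeasure d)) := by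
  refine Integrable.of_bound (C := 1) ((meas_real ν).pow_const 2).aestronglyMeasurable ?_
  refine Eventually.of_forall fun q => ?_
  rw [Real.norm_eq_abs, abs_of_nonneg (by positivity)]
  exact pow_le_one₀ measureReal_nonneg measureReal_le_one

def GG {d : ℕ} (t : ℝ) (y : Eu (d+1)) (p : Eu (d+1) × Eu (d+1)) : ℝ :=
  Set.indicator {p : Eu (d+1) × Eu (d+1) | t ≤ ⟪y, p.1⟫ ∧ t ≤ ⟪y, p.2⟫} 1 p

lemma tau_int {m : ℝ} (h1 : -1 ≤ m) (h2 : m ≤ 1) :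
    ∫ t, Set.indicator (Set.Iic m) (1 : ℝ → ℝ) t ∂tau = m + 1 := by
  rw [integral_indicator_one measurableSet_Iic, tau, measureReal_def,
    Measure.restrict_apply measurableSet_Iic]
  have : Set.Iic m ∩ Set.Icc (-1) 1 = Set.Icc (-1) m := by
    ext t; simp only [Set.mem_inter_iff, Set.mem_Iic, Set.mem_Icc]
    constructor
    · rintro ⟨a, b, c⟩; exact ⟨b, a⟩
    · rintro ⟨a, b⟩; exact ⟨b, a, b.trans h2⟩
  rw [this, Real.volume_Icc, ENNReal.toReal_ofReal (by linarith)]; ring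

lemma energy (d : ℕ) (hd : 1 ≤ d) (ν : Measure (Eu (d+1))) [IsProbabilityMeasure ν]
    (hν : ∀ᵐ z ∂ν, ‖z‖ = 1) :
    ∫ t, ∫ y, (ν.real {z | t ≤ ⟪y, z⟫})^2 ∂(sigmaMeasure d) ∂tau
      = 1 - HB d / HS d * ∫ p, dist p.1 p.2 ∂(ν.prod ν) := by
  set σ := sigmaMeasure d with hσ
  have hGm : Measurable (fun r : (ℝ × Eu (d+1)) × (Eu (d+1) × Eu (d+1)) => GG r.1.1 r.1.2 r.2) := by
    have hs : MeasurableSet {r : (ℝ × Eu (d+1)) × (Eu (d+1) × Eu (d+1)) |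
        r.1.1 ≤ ⟪r.1.2, r.2.1⟫ ∧ r.1.1 ≤ ⟪r.1.2, r.2.2⟫} :=
      meas_and (measurableSet_le (by fun_prop) (by fun_prop))
        (measurableSet_le (by fun_prop) (by fun_prop))
    exact (measurable_one (α := ℝ)).indicator hs
  have hGb : ∀ (t : ℝ) (y : Eu (d+1)) p, ‖GG t y p‖ ≤ 1 := by
    intro t y p
    unfold GG Set.indicator
    split_ifs <;> simp
  have hGi : Integrable (Function.uncurry fun (q : ℝ × Eu (d+1)) (p : Eu (d+1) × Eu (d+1)) =>
      GG q.1 q.2 p) ((tau.prod σ).prod (ν.prod ν)) :=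
    Integrable.of_bound (C := 1) hGm.aestronglyMeasurable (Eventually.of_forall fun r => hGb _ _ _)
  have s1 : ∀ (t : ℝ) (y : Eu (d+1)), (ν.real {z | t ≤ ⟪y, z⟫})^2 = ∫ p, GG t y p ∂(ν.prod ν) := by
    intro t y
    unfold GG
    rw [integral_indicator_one (meas_and (measurableSet_le (by fun_prop) (by fun_prop))
        (measurableSet_le (by fun_prop) (by fun_prop)))]
    have : {p : Eu (d+1) × Eu (d+1) | t ≤ ⟪y, p.1⟫ ∧ t ≤ ⟪y, p.2⟫}
        = {z | t ≤ ⟪y, z⟫} ×ˢ {z | t ≤ ⟪y, z⟫} := by ext p; simp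
    rw [this, measureReal_prod_prod, sq]
  have s2 : ∫ t, ∫ y, (ν.real {z | t ≤ ⟪y, z⟫})^2 ∂σ ∂tau
      = ∫ q, ∫ p, GG q.1 q.2 p ∂(ν.prod ν) ∂(tau.prod σ) := by
    rw [← integral_prod (fun q : ℝ × Eu (d+1) => (ν.real {z | q.1 ≤ ⟪q.2, z⟫})^2) (int_sq ν)]
    simp_rw [s1]
    rfl
  rw [s2, integral_integral_swap hGi]
  have hν2 : ∀ᵐ p ∂(ν.prod ν), ‖p.1‖ = 1 ∧ ‖p.2‖ = 1 := by
    exact ((Measure.quasiMeasurePreserving_fst (μ := ν) (ν := ν)).ae hν).and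
      ((Measure.quasiMeasurePreserving_snd (μ := ν) (ν := ν)).ae hν)
  have s3 : ∀ᵐ p ∂(ν.prod ν), ∫ q, GG q.1 q.2 p ∂(tau.prod σ)
      = 1 - HB d / HS d * dist p.1 p.2 := by
    filter_upwards [hν2] with p hp
    have hi : Integrable (fun q : ℝ × Eu (d+1) => GG q.1 q.2 p) (tau.prod σ) :=
      Integrable.of_bound (C := 1)
        (hGm.comp (g := _) (f := fun q : ℝ × Eu (d+1) => (q, p)) (by fun_prop)).aestronglyMeasurable
        (Eventually.of_forall fun r => hGb _ _ _)
    rw [integral_prod_symm _ hi, ← sigma_min d hd p.1 p.2]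
    refine integral_congr_ae ?_
    filter_upwards [sigma_ae d] with y hy
    have b1 := abs_le.1 (inner_abs_le hy hp.1)
    have b2 := abs_le.1 (inner_abs_le hy hp.2)
    rw [real_inner_comm, real_inner_comm y p.2, ← tau_int (le_min b1.1 b2.1) ((min_le_left _ _).trans b1.2)]
    congr 1; ext t
    unfold GG Set.indicator
    simp
  rw [integral_congr_ae s3]
  have hdist : Integrable (fun p : Eu (d+1) × Eu (d+1) => dist p.1 p.2) (ν.prod ν) := by
    refine Integrable.of_bound (C := 2) (by fun_prop) ?_
    filter_upwards [hν2] with p hp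
    rw [Real.norm_eq_abs, abs_of_nonneg dist_nonneg]
    have := dist_le_norm_add_norm p.1 p.2
    rw [hp.1, hp.2] at this; linarith
  rw [integral_sub (integrable_const _) (hdist.const_mul _), integral_const_mul]
  simp

lemma avg_cap (d : ℕ) (ν : Measure (Eu (d+1))) [IsProbabilityMeasure ν]
    (hν : ∀ᵐ z ∂ν, ‖z‖ = 1) (t : ℝ) :
    ∫ y, ν.real {z | t ≤ ⟪y, z⟫} ∂(sigmaMeasure d) = (sigmaMeasure d).real {z | t ≤ ⟪e0 d, z⟫} := by
  have hs : MeasurableSet {r : Eu (d+1) × Eu (d+1) | t ≤ ⟪r.1, r.2⟫} :=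
    measurableSet_le (by fun_prop) (by fun_prop)
  have hi : Integrable (Function.uncurry fun (y z : Eu (d+1)) =>
      Set.indicator {z | t ≤ ⟪y, z⟫} (1 : Eu (d+1) → ℝ) z) ((sigmaMeasure d).prod ν) := by
    have : (Function.uncurry fun (y z : Eu (d+1)) =>
      Set.indicator {z | t ≤ ⟪y, z⟫} (1 : Eu (d+1) → ℝ) z) = Set.indicator
        {r : Eu (d+1) × Eu (d+1) | t ≤ ⟪r.1, r.2⟫} 1 := by ext r; rfl
    rw [this]
    exact (integrable_const (1:ℝ)).indicator hs
  have h1 : ∀ y, ν.real {z | t ≤ ⟪y, z⟫}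
      = ∫ z, Set.indicator {z | t ≤ ⟪y, z⟫} (1 : Eu (d+1) → ℝ) z ∂ν := by
    intro y; rw [integral_indicator_one (meas_cap_inner t y)]
  simp_rw [h1]
  rw [integral_integral_swap hi]
  have h2 : ∀ᵐ z ∂ν, ∫ y, Set.indicator {z | t ≤ ⟪y, z⟫} (1 : Eu (d+1) → ℝ) z ∂(sigmaMeasure d)
      = (sigmaMeasure d).real {z | t ≤ ⟪e0 d, z⟫} := by
    filter_upwards [hν] with z hz
    rw [← cap_meas d t z (e0 d) (by rw [hz, norm_e0]), ← integral_indicator_one (meas_cap_inner t z)]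
    congr 1; ext y
    simp only [Set.indicator, Set.mem_ofPred_eq, real_inner_comm, Pi.one_apply]
  rw [integral_congr_ae h2]; simp

lemma disc_general (d : ℕ) (hd : 1 ≤ d) (ν : Measure (Eu (d+1))) [IsProbabilityMeasure ν]
    (hν : ∀ᵐ z ∂ν, ‖z‖ = 1) :
    ∫ t, ∫ y, (ν.real {z | t ≤ ⟪y, z⟫} - (sigmaMeasure d).real {z | t ≤ ⟪y, z⟫})^2
        ∂(sigmaMeasure d) ∂tau
      = HB d / HS d * (∫ p, dist p.1 p.2 ∂((sigmaMeasure d).prod (sigmaMeasure d))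
          - ∫ p, dist p.1 p.2 ∂(ν.prod ν)) := by
  have key : ∀ t : ℝ,
      ∫ y, (ν.real {z | t ≤ ⟪y, z⟫} - (sigmaMeasure d).real {z | t ≤ ⟪y, z⟫})^2 ∂(sigmaMeasure d)
      = ∫ y, (ν.real {z | t ≤ ⟪y, z⟫})^2 ∂(sigmaMeasure d)
        - ∫ y, ((sigmaMeasure d).real {z | t ≤ ⟪y, z⟫})^2 ∂(sigmaMeasure d) := by
    intro t
    set β := (sigmaMeasure d).real {z | t ≤ ⟪e0 d, z⟫} with hβ
    have hb : ∀ᵐ y ∂(sigmaMeasure d), (sigmaMeasure d).real {z | t ≤ ⟪y, z⟫} = β := by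
      filter_upwards [sigma_ae d] with y hy
      exact cap_meas d t y (e0 d) (by rw [hy, norm_e0])
    have m1 : Measurable fun y => ν.real {z | t ≤ ⟪y, z⟫} :=
      (meas_real ν).comp (g := _) (f := fun y : Eu (d+1) => (t, y)) (by fun_prop)
    have i1 : Integrable (fun y => ν.real {z | t ≤ ⟪y, z⟫}) (sigmaMeasure d) := by
      refine Integrable.of_bound (C := 1) m1.aestronglyMeasurable (Eventually.of_forall fun y => ?_)
      rw [Real.norm_eq_abs, abs_of_nonneg measureReal_nonneg]; exact measureReal_le_one
    have i2 : Integrable (fun y => (ν.real {z | t ≤ ⟪y, z⟫})^2) (sigmaMeasure d) := by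
      refine Integrable.of_bound (C := 1) (m1.pow_const 2).aestronglyMeasurable
        (Eventually.of_forall fun y => ?_)
      rw [Real.norm_eq_abs, abs_of_nonneg (by positivity)]
      exact pow_le_one₀ measureReal_nonneg measureReal_le_one
    have e1 : ∫ y, ((sigmaMeasure d).real {z | t ≤ ⟪y, z⟫})^2 ∂(sigmaMeasure d) = β^2 := by
      rw [integral_congr_ae (g := fun _ => β^2) (hb.mono fun y hy => by simp only [hy])]; simp
    have e2 : ∫ y, (ν.real {z | t ≤ ⟪y, z⟫} - (sigmaMeasure d).real {z | t ≤ ⟪y, z⟫})^2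
        ∂(sigmaMeasure d) = ∫ y, ((ν.real {z | t ≤ ⟪y, z⟫})^2
          - (2 * β) * ν.real {z | t ≤ ⟪y, z⟫} + β^2) ∂(sigmaMeasure d) :=
      integral_congr_ae (hb.mono fun y hy => by simp only [hy]; ring)
    have i3 : Integrable (fun y => (ν.real {z | t ≤ ⟪y, z⟫})^2
          - (2 * β) * ν.real {z | t ≤ ⟪y, z⟫}) (sigmaMeasure d) := i2.sub (i1.const_mul _)
    rw [e1, e2, integral_add i3 (integrable_const _),
      integral_sub i2 (i1.const_mul _), integral_const_mul, avg_cap d ν hν t, ← hβ]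
    simp; ring
  simp_rw [key]
  rw [integral_sub (int_sq ν).integral_prod_left (int_sq (sigmaMeasure d)).integral_prod_left,
    energy d hd ν hν, energy d hd _ (sigma_ae d)]
  ring

def nuN {d N : ℕ} (x : Fin N → Eu (d+1)) : Measure (Eu (d+1)) :=
  (N : ℝ≥0∞)⁻¹ • ∑ k, Measure.dirac (x k)

lemma nuN_prob {d N : ℕ} (hN : 0 < N) (x : Fin N → Eu (d+1)) : IsProbabilityMeasure (nuN x) := by
  refine ⟨?_⟩
  simp only [nuN, Measure.smul_apply, Measure.coe_finsetSum, Finset.sum_apply, measure_univ,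
    Finset.sum_const, Finset.card_univ, Fintype.card_fin, smul_eq_mul, nsmul_eq_mul, mul_one]
  exact ENNReal.inv_mul_cancel (by exact_mod_cast hN.ne') (by simp)

lemma nuN_integral {d N : ℕ} (x : Fin N → Eu (d+1)) (f : Eu (d+1) → ℝ) :
    ∫ z, f z ∂(nuN x) = (1 / (N:ℝ)) * ∑ k, f (x k) := by
  rw [nuN, integral_smul_measure, integral_finsetSum_measure]
  · simp
  · intro i _
    exact integrable_dirac (by simp)

theorem stolarsky_invariance_principle (d : ℕ) (hd : 2 ≤ d) (N : ℕ) (hN : 0 < N)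
    (x : Fin N → EuclideanSpace ℝ (Fin (d + 1)))
    (hx : ∀ k, x k ∈ sphere (0 : EuclideanSpace ℝ (Fin (d + 1))) 1) :
    (1 / (N : ℝ) ^ 2) * ∑ j, ∑ k, dist (x j) (x k)
      + ((μH[(d : ℝ)] (sphere (0 : EuclideanSpace ℝ (Fin (d + 1))) 1)).toReal
          / (μH[(d : ℝ)] (closedBall (0 : EuclideanSpace ℝ (Fin d)) 1)).toReal)
        * (L2Disc d N x) ^ 2
      = ∫ p : EuclideanSpace ℝ (Fin (d + 1)) × EuclideanSpace ℝ (Fin (d + 1)),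
          dist p.1 p.2 ∂ (sigmaMeasure d).prod (sigmaMeasure d) := by
  have hB := HB_pos d
  have hS := HS_pos d
  have := nuN_prob hN x
  have hν : ∀ᵐ z ∂(nuN x), ‖z‖ = 1 := by
    refine Measure.ae_smul_measure ?_ _
    rw [← Measure.sum_fintype, Measure.ae_sum_iff]
    intro k
    rw [ae_dirac_iff (measurableSet_eq_fun (by fun_prop) (by fun_prop))]
    simpa using hx k
  have h := disc_general d (by omega) (nuN x) hν
  have hcap : ∀ (t : ℝ) (y : Eu (d+1)), (nuN x).real {z | t ≤ ⟪y, z⟫}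
      = (Nat.card {k : Fin N // t ≤ ⟪y, x k⟫} : ℝ) / N := by
    intro t y
    rw [← integral_indicator_one (meas_cap_inner t y), nuN_integral]
    simp only [Set.indicator, Set.mem_ofPred_eq, Pi.one_apply, Finset.sum_boole]
    rw [Nat.card_eq_fintype_card, Fintype.card_subtype]; ring
  simp_rw [hcap] at h
  have hD : ∫ p, dist p.1 p.2 ∂((nuN x).prod (nuN x))
      = (1 / (N : ℝ) ^ 2) * ∑ j, ∑ k, dist (x j) (x k) := by
    have hi : Integrable (fun p : Eu (d+1) × Eu (d+1) => dist p.1 p.2) ((nuN x).prod (nuN x)) := by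
      refine Integrable.of_bound (C := 2) (by fun_prop) ?_
      filter_upwards [(Measure.quasiMeasurePreserving_fst (μ := nuN x) (ν := nuN x)).ae hν,
        (Measure.quasiMeasurePreserving_snd (μ := nuN x) (ν := nuN x)).ae hν] with p h1 h2
      rw [Real.norm_eq_abs, abs_of_nonneg dist_nonneg]
      have := dist_le_norm_add_norm p.1 p.2
      rw [h1, h2] at this; linarith
    rw [integral_prod _ hi]
    simp only [nuN_integral]
    rw [← Finset.mul_sum]; ring
  have h' : L2DiscSq d N x = HB d / HS d *
      (∫ p, dist p.1 p.2 ∂((sigmaMeasure d).prod (sigmaMeasure d))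
          - ∫ p, dist p.1 p.2 ∂((nuN x).prod (nuN x))) := h
  have hnn : 0 ≤ L2DiscSq d N x := by
    unfold L2DiscSq
    exact integral_nonneg fun t => integral_nonneg fun y => sq_nonneg _
  rw [L2Disc, Real.sq_sqrt hnn, h', hD]
  change _ + HS d / HB d * _ = _
  field_simp
  ring
end
end

section
/- Let d ≥ 2. There exist constants c′, C′ > 0 such that for all sufficiently large N, c′ · N^{−1/2 − 1/(2d)} ≤ D_{L2,C}(S^d; N) ≤ C′ · N^{−1/2 − 1/(2d)}, where D_{L2,C}(S^d; N) is the optimal (infimal) spherical cap L2-discrepancy over all N-point configurations on S^d. -/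
open MeasureTheory Metric Real Filter
open scoped BigOperators ENNReal NNReal RealInnerProductSpace Topology

noncomputable section

/-- Optimal (infimal) spherical cap `L²`-discrepancy over all `N`-point configurations
on `S^d`. -/
def optL2Disc (d N : ℕ) : ℝ :=
  ⨅ x : {x : Fin N → EuclideanSpace ℝ (Fin (d + 1)) //
    ∀ k, x k ∈ sphere (0 : EuclideanSpace ℝ (Fin (d + 1))) 1}, L2Disc d N x.1

/-- The chart of the sphere: two stereographic half-charts, placed apart. -/
def chartMap (d : ℕ) (x : EuclideanSpace ℝ (Fin (d + 1))) (j : Fin d) : ℝ :=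
  x j.castSucc / (1 + |x (Fin.last d)|) + (if 0 ≤ x (Fin.last d) then 3 else 0)

lemma sphere_sum {d : ℕ} {x : EuclideanSpace ℝ (Fin (d + 1))}
    (hx : x ∈ sphere (0 : EuclideanSpace ℝ (Fin (d + 1))) 1) :
    ∑ j : Fin d, (x j.castSucc) ^ 2 + (x (Fin.last d)) ^ 2 = 1 := by
  have h : ‖x‖ = 1 := by simpa using hx
  have := EuclideanSpace.real_norm_sq_eq x
  rw [h, Fin.sum_univ_castSucc] at this
  linarith

lemma measurable_chartMap (d : ℕ) (j : Fin d) : Measurable (fun x => chartMap d x j) := by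
  unfold chartMap
  have h1 : ∀ i : Fin (d+1), Measurable (fun x : EuclideanSpace ℝ (Fin (d + 1)) => x i) := by
    intro i; fun_prop
  refine Measurable.add ((h1 _).div (by fun_prop)) ?_
  exact Measurable.ite (measurableSet_le measurable_const (h1 _)) measurable_const measurable_const

lemma chartMap_part_bound {d : ℕ} {x : EuclideanSpace ℝ (Fin (d + 1))}
    (hx : x ∈ sphere (0 : EuclideanSpace ℝ (Fin (d + 1))) 1) (j : Fin d) :
    |x j.castSucc / (1 + |x (Fin.last d)|)| ≤ 1 := by
  have h := sphere_sum hx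
  have h2 : (x j.castSucc) ^ 2 ≤ ∑ j : Fin d, (x j.castSucc) ^ 2 :=
    Finset.single_le_sum (f := fun j : Fin d => (x j.castSucc) ^ 2)
      (fun i _ => sq_nonneg _) (Finset.mem_univ j)
  have h3 : |x j.castSucc| ≤ 1 := by
    rw [← sq_le_one_iff_abs_le_one]; nlinarith [sq_nonneg (x (Fin.last d))]
  have h0 := abs_nonneg (x (Fin.last d))
  rw [abs_div, abs_of_pos (by positivity : 0 < 1 + |x (Fin.last d)|), div_le_one (by positivity)]
  linarith

lemma chartMap_mem {d : ℕ} {x : EuclideanSpace ℝ (Fin (d + 1))}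
    (hx : x ∈ sphere (0 : EuclideanSpace ℝ (Fin (d + 1))) 1) (j : Fin d) :
    chartMap d x j ∈ Set.Icc (-1 : ℝ) 4 := by
  have := abs_le.1 (chartMap_part_bound hx j)
  unfold chartMap
  split_ifs <;> constructor <;> linarith

lemma sum_abs_sq_le {d : ℕ} (a : Fin d → ℝ) : ∑ j, a j ^ 2 ≤ (∑ j, |a j|) ^ 2 := by
  have := Finset.sum_sq_le_sq_sum_of_nonneg (s := Finset.univ) (f := fun j => |a j|)
    (fun i _ => abs_nonneg _)
  simpa using this

lemma chartMap_dist {d : ℕ} (hd : 0 < d) {x y : EuclideanSpace ℝ (Fin (d + 1))}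
    (hx : x ∈ sphere (0 : EuclideanSpace ℝ (Fin (d + 1))) 1)
    (hy : y ∈ sphere (0 : EuclideanSpace ℝ (Fin (d + 1))) 1) :
    ‖x - y‖ ≤ 2 * ∑ j, |chartMap d x j - chartMap d y j| := by
  by_cases hs : (0 ≤ x (Fin.last d) ↔ 0 ≤ y (Fin.last d))
  · have e : ∀ j, chartMap d x j - chartMap d y j =
        x j.castSucc / (1 + |x (Fin.last d)|) - y j.castSucc / (1 + |y (Fin.last d)|) := by
      intro j; unfold chartMap
      by_cases h : 0 ≤ x (Fin.last d)
      · rw [if_pos h, if_pos (hs.1 h)]; ring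
      · rw [if_neg h, if_neg (fun h' => h (hs.2 h'))]; ring
    have hxx := sphere_sum hx
    have hyy := sphere_sum hy
    have hprod : |x (Fin.last d)| * |y (Fin.last d)| = x (Fin.last d) * y (Fin.last d) := by
      by_cases h : 0 ≤ x (Fin.last d)
      · rw [abs_of_nonneg h, abs_of_nonneg (hs.1 h)]
      · have h' : ¬ 0 ≤ y (Fin.last d) := fun h' => h (hs.2 h')
        rw [abs_of_neg (not_le.1 h), abs_of_neg (not_le.1 h')]; ring
    have hnorm : ‖x - y‖ ^ 2 = 2 - 2 * ∑ j : Fin d, x j.castSucc * y j.castSucc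
        - 2 * (x (Fin.last d) * y (Fin.last d)) := by
      rw [EuclideanSpace.real_norm_sq_eq, Fin.sum_univ_castSucc]
      have : ∑ j : Fin d, (x - y) j.castSucc ^ 2 = ∑ j : Fin d, (x j.castSucc) ^ 2
          + ∑ j : Fin d, (y j.castSucc) ^ 2 - 2 * ∑ j : Fin d, x j.castSucc * y j.castSucc := by
        rw [Finset.mul_sum, ← Finset.sum_add_distrib, ← Finset.sum_sub_distrib]
        refine Finset.sum_congr rfl fun j _ => ?_
        simp only [PiLp.sub_apply]; ring
      rw [this]; simp only [PiLp.sub_apply]; nlinarith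
    set a := 1 + |x (Fin.last d)| with ha
    set b := 1 + |y (Fin.last d)| with hb
    have hx1 : |x (Fin.last d)| ≤ 1 := by
      rw [← sq_le_one_iff_abs_le_one]
      have : 0 ≤ ∑ j : Fin d, (x j.castSucc) ^ 2 := Finset.sum_nonneg fun i _ => sq_nonneg _
      linarith
    have hy1 : |y (Fin.last d)| ≤ 1 := by
      rw [← sq_le_one_iff_abs_le_one]
      have : 0 ≤ ∑ j : Fin d, (y j.castSucc) ^ 2 := Finset.sum_nonneg fun i _ => sq_nonneg _
      linarith
    have ha0 : 1 ≤ a := by rw [ha]; linarith [abs_nonneg (x (Fin.last d))]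
    have hb0 : 1 ≤ b := by rw [hb]; linarith [abs_nonneg (y (Fin.last d))]
    have hsum : ∑ j : Fin d, (x j.castSucc / a - y j.castSucc / b) ^ 2 * (a * b) =
        (∑ j : Fin d, (x j.castSucc) ^ 2) * (b / a) + (∑ j : Fin d, (y j.castSucc) ^ 2) * (a / b)
        - 2 * ∑ j : Fin d, x j.castSucc * y j.castSucc := by
      rw [Finset.mul_sum, Finset.sum_mul, Finset.sum_mul, ← Finset.sum_add_distrib,
        ← Finset.sum_sub_distrib]
      refine Finset.sum_congr rfl fun j _ => ?_
      field_simp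
      ring
    have hsx : ∑ j : Fin d, (x j.castSucc) ^ 2 = (2 - a) * a := by
      have : |x (Fin.last d)| ^ 2 = x (Fin.last d) ^ 2 := sq_abs _
      rw [ha]; nlinarith
    have hsy : ∑ j : Fin d, (y j.castSucc) ^ 2 = (2 - b) * b := by
      have : |y (Fin.last d)| ^ 2 = y (Fin.last d) ^ 2 := sq_abs _
      rw [hb]; nlinarith
    have h4 : ‖x - y‖ ^ 2 = a * b * ∑ j : Fin d, (x j.castSucc / a - y j.castSucc / b) ^ 2 := by
      rw [Finset.mul_sum, hnorm, ← hprod]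
      simp only [mul_comm (a * b)]
      rw [hsum, hsx, hsy]
      have e1 : |x (Fin.last d)| = a - 1 := by rw [ha]; ring
      have e2 : |y (Fin.last d)| = b - 1 := by rw [hb]; ring
      rw [e1, e2]
      field_simp
      ring
    have hab : a * b ≤ 4 := by
      have : a ≤ 2 := by rw [ha]; linarith
      have : b ≤ 2 := by rw [hb]; linarith
      nlinarith
    have h5 := sum_abs_sq_le (fun j : Fin d => x j.castSucc / a - y j.castSucc / b)
    simp only [e]
    refine abs_le_of_sq_le_sq' ?_ (by positivity) |>.2
    have h6 : 0 ≤ ∑ j : Fin d, (x j.castSucc / a - y j.castSucc / b) ^ 2 :=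
      Finset.sum_nonneg fun i _ => sq_nonneg _
    rw [h4, mul_pow]
    nlinarith
  · have h2 : ‖x - y‖ ≤ 2 := by
      have h1 : ‖x‖ = 1 := by simpa using hx
      have h1' : ‖y‖ = 1 := by simpa using hy
      linarith [norm_sub_le x y]
    have h3 : 1 ≤ |chartMap d x ⟨0, hd⟩ - chartMap d y ⟨0, hd⟩| := by
      have hx1 := abs_le.1 (chartMap_part_bound hx ⟨0, hd⟩)
      have hy1 := abs_le.1 (chartMap_part_bound hy ⟨0, hd⟩)
      unfold chartMap
      by_cases h : 0 ≤ x (Fin.last d)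
      · have h' : ¬ 0 ≤ y (Fin.last d) := by tauto
        rw [if_pos h, if_neg h', le_abs]; left; linarith
      · have h' : 0 ≤ y (Fin.last d) := by tauto
        rw [if_neg h, if_pos h', le_abs]; right; linarith
    have h4 : |chartMap d x ⟨0, hd⟩ - chartMap d y ⟨0, hd⟩| ≤
        ∑ j, |chartMap d x j - chartMap d y j| :=
      Finset.single_le_sum (f := fun j => |chartMap d x j - chartMap d y j|)
        (fun i _ => abs_nonneg _) (Finset.mem_univ _)
    linarith

/-- Finite Hausdorff measure of the sphere. -/
lemma hausdorff_sphere_lt_top {d : ℕ} (hd : 0 < d) :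
    μH[(d : ℝ)] (sphere (0 : EuclideanSpace ℝ (Fin (d + 1))) 1) < ∞ := by
  set S := sphere (0 : EuclideanSpace ℝ (Fin (d + 1))) 1 with hS
  let f : S → (Fin d → ℝ) := fun x => chartMap d x.1
  have hf : AntilipschitzWith (2 * d) f := by
    refine AntilipschitzWith.of_le_mul_dist fun x y => ?_
    rw [Subtype.dist_eq, dist_eq_norm]
    refine (chartMap_dist hd x.2 y.2).trans ?_
    push_cast
    rw [mul_assoc]
    refine mul_le_mul_of_nonneg_left ?_ (by norm_num)
    calc ∑ j, |chartMap d x j - chartMap d y j| ≤ ∑ j : Fin d, dist (f x) (f y) := by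
          refine Finset.sum_le_sum fun j _ => ?_
          have := dist_le_pi_dist (f x) (f y) j
          rwa [Real.dist_eq] at this
      _ = d * dist (f x) (f y) := by simp
  have h1 := hf.hausdorffMeasure_preimage_le (d := (d : ℝ)) (by positivity)
    (Set.Icc (fun _ => (-1 : ℝ)) (fun _ => 4))
  have h2 : f ⁻¹' (Set.Icc (fun _ => (-1 : ℝ)) (fun _ => 4)) = Set.univ := by
    ext x
    simp only [Set.mem_preimage, Set.mem_univ, iff_true]
    exact ⟨fun j => (chartMap_mem x.2 j).1, fun j => (chartMap_mem x.2 j).2⟩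
  rw [h2] at h1
  have h3 : (μH[(d : ℝ)] : Measure (Fin d → ℝ)) = volume := by
    have := hausdorffMeasure_pi_real (ι := Fin d)
    simpa using this
  rw [h3] at h1
  have h4 : μH[(d : ℝ)] S = μH[(d : ℝ)] (Set.univ : Set S) := by
    have := (isometry_subtype_coe (s := S)).hausdorffMeasure_image (d := (d : ℝ))
      (Or.inl (by positivity)) Set.univ
    rw [← this]; simp
  rw [h4]
  refine h1.trans_lt (ENNReal.mul_lt_top ?_ ?_)
  · exact ENNReal.rpow_lt_top_of_nonneg (by positivity) ENNReal.coe_ne_top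
  · exact isCompact_Icc.measure_lt_top

/-- Lift of the ball to the upper hemisphere. -/
def liftMap (d : ℕ) (u : EuclideanSpace ℝ (Fin d)) : EuclideanSpace ℝ (Fin (d + 1)) :=
  WithLp.toLp 2 (Fin.snoc (α := fun _ => ℝ) (fun j => u j) (√(1 - ‖u‖ ^ 2)))

lemma liftMap_castSucc (d : ℕ) (u : EuclideanSpace ℝ (Fin d)) (j : Fin d) :
    liftMap d u j.castSucc = u j := by simp [liftMap]

lemma liftMap_last (d : ℕ) (u : EuclideanSpace ℝ (Fin d)) :
    liftMap d u (Fin.last d) = √(1 - ‖u‖ ^ 2) := by simp [liftMap]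

lemma measurable_liftMap (d : ℕ) : Measurable (liftMap d) := by
  have : Continuous (liftMap d) := by
    unfold liftMap
    refine (PiLp.continuous_toLp 2 _).comp ?_
    refine continuous_pi fun i => ?_
    refine Fin.lastCases ?_ (fun j => ?_) i
    · simp only [Fin.snoc_last]; fun_prop
    · simp only [Fin.snoc_castSucc]; fun_prop
  exact this.measurable

lemma liftMap_mem (d : ℕ) {u : EuclideanSpace ℝ (Fin d)} (hu : ‖u‖ ≤ 1) :
    liftMap d u ∈ sphere (0 : EuclideanSpace ℝ (Fin (d + 1))) 1 := by
  have h : ‖liftMap d u‖ ^ 2 = 1 := by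
    rw [EuclideanSpace.real_norm_sq_eq, Fin.sum_univ_castSucc]
    simp only [liftMap_castSucc, liftMap_last]
    rw [Real.sq_sqrt (by nlinarith [norm_nonneg u]), ← EuclideanSpace.real_norm_sq_eq]
    ring
  have : ‖liftMap d u‖ = 1 := by
    nlinarith [norm_nonneg (liftMap d u)]
  simpa using this

lemma hausdorff_sphere_pos (d : ℕ) :
    0 < μH[(d : ℝ)] (sphere (0 : EuclideanSpace ℝ (Fin (d + 1))) 1) := by
  let p : EuclideanSpace ℝ (Fin (d + 1)) → (Fin d → ℝ) := fun x j => x j.castSucc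
  have hp : LipschitzWith 1 p := by
    refine LipschitzWith.of_dist_le_mul fun x y => ?_
    rw [NNReal.coe_one, one_mul, dist_pi_le_iff dist_nonneg]
    intro j
    rw [Real.dist_eq, dist_eq_norm]
    exact (PiLp.norm_apply_le (x - y) j.castSucc)
  have h1 := hp.hausdorffMeasure_image_le (d := (d : ℝ)) (by positivity)
    (sphere (0 : EuclideanSpace ℝ (Fin (d + 1))) 1)
  have h3 : (μH[(d : ℝ)] : Measure (Fin d → ℝ)) = volume := by
    have := hausdorffMeasure_pi_real (ι := Fin d)
    simpa using this
  rw [h3] at h1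
  have h2 : {v : Fin d → ℝ | ‖WithLp.toLp 2 v‖ < 1} ⊆
      p '' (sphere (0 : EuclideanSpace ℝ (Fin (d + 1))) 1) := by
    intro v hv
    refine ⟨liftMap d (WithLp.toLp 2 v), liftMap_mem d (le_of_lt hv), ?_⟩
    funext j
    simp only [p, liftMap_castSucc]
  have ho : IsOpen {v : Fin d → ℝ | ‖WithLp.toLp 2 v‖ < 1} := by
    refine isOpen_lt ?_ continuous_const
    exact (PiLp.continuous_toLp 2 _).norm
  have h5 : 0 < volume {v : Fin d → ℝ | ‖WithLp.toLp 2 v‖ < 1} :=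
    ho.measure_pos _ ⟨0, by simp⟩
  have h6 := h5.trans_le ((measure_mono h2).trans h1)
  simpa using h6

lemma sigma_prob {d : ℕ} (hd : 0 < d) : IsProbabilityMeasure (sigmaMeasure d) := by
  constructor
  unfold sigmaMeasure
  simp only [Measure.smul_apply, Measure.restrict_apply_univ, smul_eq_mul]
  exact ENNReal.inv_mul_cancel (hausdorff_sphere_pos d).ne' (hausdorff_sphere_lt_top hd).ne

lemma sigma_ae_mem (d : ℕ) :
    ∀ᵐ x ∂ sigmaMeasure d, x ∈ sphere (0 : EuclideanSpace ℝ (Fin (d + 1))) 1 := by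
  unfold sigmaMeasure
  exact Measure.ae_smul_measure (ae_restrict_mem isClosed_sphere.measurableSet) _

lemma sigma_invariant {d : ℕ}
    (L : EuclideanSpace ℝ (Fin (d + 1)) ≃ₗᵢ[ℝ] EuclideanSpace ℝ (Fin (d + 1))) :
    MeasurePreserving L (sigmaMeasure d) (sigmaMeasure d) := by
  unfold sigmaMeasure
  refine MeasurePreserving.smul_measure ?_ _
  have h := (L.toIsometryEquiv.measurePreserving_hausdorffMeasure (d : ℝ)).restrict_preimage
    (s := sphere (0 : EuclideanSpace ℝ (Fin (d + 1))) 1) isClosed_sphere.measurableSet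
  have e : L.toIsometryEquiv ⁻¹' (sphere (0 : EuclideanSpace ℝ (Fin (d + 1))) 1)
      = sphere (0 : EuclideanSpace ℝ (Fin (d + 1))) 1 := by
    ext x; simp
  rw [e] at h
  exact h

lemma sigma_integral_invariant {d : ℕ}
    (L : EuclideanSpace ℝ (Fin (d + 1)) ≃ₗᵢ[ℝ] EuclideanSpace ℝ (Fin (d + 1)))
    (G : EuclideanSpace ℝ (Fin (d + 1)) → ℝ) :
    ∫ z, G (L z) ∂ sigmaMeasure d = ∫ z, G z ∂ sigmaMeasure d :=
  (sigma_invariant L).integral_comp L.toHomeomorph.measurableEmbedding G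

lemma exists_isometry {d : ℕ} {x y : EuclideanSpace ℝ (Fin (d + 1))} (h : ‖x‖ = ‖y‖) :
    ∃ L : EuclideanSpace ℝ (Fin (d + 1)) ≃ₗᵢ[ℝ] EuclideanSpace ℝ (Fin (d + 1)), L x = y :=
  ⟨_, Submodule.reflection_sub h⟩

/-- Zonal integrals do not depend on the base point. -/
lemma zonal_const {d : ℕ} {x y : EuclideanSpace ℝ (Fin (d + 1))} (h : ‖x‖ = ‖y‖) (F : ℝ → ℝ) :
    ∫ z, F ‖x - z‖ ∂ sigmaMeasure d = ∫ z, F ‖y - z‖ ∂ sigmaMeasure d := by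
  obtain ⟨L, rfl⟩ := exists_isometry h
  rw [← sigma_integral_invariant L (fun z => F ‖L x - z‖)]
  simp only [← map_sub, LinearIsometryEquiv.norm_map]


lemma quad_general {d : ℕ} (hd : 0 < d) {Z : Type} [MeasurableSpace Z] (ρ : Measure Z) [SFinite ρ]
    (φ : EuclideanSpace ℝ (Fin (d + 1)) → Z → ℝ) (hφ : Measurable (Function.uncurry φ))
    (h : Z → ℝ)
    (hb : ∀ x ∈ sphere (0 : EuclideanSpace ℝ (Fin (d + 1))) 1, ∀ z, |φ x z| ≤ h z)
    (hh : Integrable (fun z => h z ^ 2) ρ) (A : ℝ)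
    (hA : ∀ x ∈ sphere (0 : EuclideanSpace ℝ (Fin (d + 1))) 1,
      ∫ y, (∫ z, φ x z * φ y z ∂ρ) ∂ sigmaMeasure d = A)
    (N : ℕ) (hN : 0 < N) (x : Fin N → EuclideanSpace ℝ (Fin (d + 1)))
    (hx : ∀ k, x k ∈ sphere (0 : EuclideanSpace ℝ (Fin (d + 1))) 1) :
    Integrable (fun z => ((∑ k, φ (x k) z) / N - ∫ y, φ y z ∂ sigmaMeasure d) ^ 2) ρ ∧
    ∫ z, ((∑ k, φ (x k) z) / N - ∫ y, φ y z ∂ sigmaMeasure d) ^ 2 ∂ρ =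
      (∑ i, ∑ j, ∫ z, φ (x i) z * φ (x j) z ∂ρ) / (N : ℝ) ^ 2 - A := by
  have hprob := sigma_prob hd
  set σ := sigmaMeasure d with hσ
  set Q : Z → ℝ := fun z => ∫ y, φ y z ∂σ with hQ
  have hQm : Measurable Q := by
    have : StronglyMeasurable (fun z => ∫ y, φ y z ∂σ) :=
      (hφ.stronglyMeasurable).integral_prod_left
    exact this.measurable
  have hae := sigma_ae_mem d
  have hQb : ∀ z, |Q z| ≤ h z := by
    intro z
    have := norm_integral_le_of_norm_le_const (μ := σ) (f := fun y => φ y z) (C := h z)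
      (hae.mono fun y hy => hb y hy z)
    simpa using this
  have hmx : ∀ y, Measurable (φ y) := fun y => hφ.comp measurable_prodMk_left
  have hmul : ∀ (f g : Z → ℝ), Measurable f → Measurable g → (∀ z, |f z| ≤ h z) →
      (∀ z, |g z| ≤ h z) → Integrable (fun z => f z * g z) ρ := by
    intro f g hf hg hf' hg'
    refine hh.mono' (hf.mul hg).aestronglyMeasurable (Eventually.of_forall fun z => ?_)
    rw [Real.norm_eq_abs, abs_mul, sq]
    exact mul_le_mul (hf' z) (hg' z) (abs_nonneg _) ((abs_nonneg _).trans (hf' z))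
  have key : ∀ g : Z → ℝ, Measurable g → (∀ z, |g z| ≤ h z) →
      ∫ z, g z * Q z ∂ρ = ∫ y, (∫ z, g z * φ y z ∂ρ) ∂σ := by
    intro g hg hg'
    have : ∀ z, g z * Q z = ∫ y, g z * φ y z ∂σ := fun z => (integral_const_mul _ _).symm
    simp only [this]
    refine integral_integral_swap ?_
    have hd' : Integrable (fun p : Z × EuclideanSpace ℝ (Fin (d + 1)) => h p.1 ^ 2) (ρ.prod σ) :=
      hh.comp_fst σ
    have hm2 : Measurable (Function.uncurry fun z y => g z * φ y z) :=
      (hg.comp measurable_fst).mul (hφ.comp measurable_swap)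
    refine hd'.mono' hm2.aestronglyMeasurable ?_
    have : ∀ᵐ p ∂(ρ.prod σ), p.2 ∈ sphere (0 : EuclideanSpace ℝ (Fin (d + 1))) 1 :=
      Measure.quasiMeasurePreserving_snd.ae hae
    filter_upwards [this] with p hp
    simp only [Function.uncurry]
    rw [Real.norm_eq_abs, abs_mul, sq]
    exact mul_le_mul (hg' _) (hb _ hp _) (abs_nonneg _) ((abs_nonneg _).trans (hg' _))
  have key1 : ∀ y ∈ sphere (0 : EuclideanSpace ℝ (Fin (d + 1))) 1, ∫ z, φ y z * Q z ∂ρ = A := by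
    intro y hy
    rw [key _ (hmx y) (hb y hy), hA y hy]
  have key2 : ∫ z, Q z * Q z ∂ρ = A := by
    rw [key Q hQm hQb]
    have : ∀ᵐ y ∂σ, ∫ z, Q z * φ y z ∂ρ = A := by
      filter_upwards [hae] with y hy
      rw [← key1 y hy]
      exact integral_congr_ae (Eventually.of_forall fun z => mul_comm _ _)
    rw [integral_congr_ae this]
    simp
  have hN0 : (N : ℝ) ≠ 0 := by positivity
  have expand : ∀ z, ((∑ k, φ (x k) z) / N - Q z) ^ 2 =
      (∑ i, ∑ j, φ (x i) z * φ (x j) z) / (N : ℝ) ^ 2 - 2 / N * (∑ i, φ (x i) z * Q z)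
        + Q z * Q z := by
    intro z
    rw [← Finset.sum_mul_sum, ← Finset.sum_mul]
    field_simp
    ring
  have i1 : Integrable (fun z => (∑ i, ∑ j, φ (x i) z * φ (x j) z) / (N : ℝ) ^ 2) ρ :=
    (integrable_finsetSum _ fun i _ => integrable_finsetSum _ fun j _ =>
      hmul _ _ (hmx _) (hmx _) (hb _ (hx i)) (hb _ (hx j))).div_const _
  have i2 : Integrable (fun z => 2 / N * (∑ i, φ (x i) z * Q z)) ρ :=
    (integrable_finsetSum _ fun i _ => hmul _ _ (hmx _) hQm (hb _ (hx i)) hQb).const_mul _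
  have i3 : Integrable (fun z => Q z * Q z) ρ := hmul _ _ hQm hQm hQb hQb
  change Integrable (fun z => ((∑ k, φ (x k) z) / N - Q z) ^ 2) ρ ∧
    ∫ z, ((∑ k, φ (x k) z) / N - Q z) ^ 2 ∂ρ = _
  simp only [expand]
  refine ⟨(i1.sub i2).add i3, ?_⟩
  have i12 : Integrable (fun z => (∑ i, ∑ j, φ (x i) z * φ (x j) z) / (N : ℝ) ^ 2 -
      2 / N * (∑ i, φ (x i) z * Q z)) ρ := i1.sub i2
  rw [integral_add i12 i3, integral_sub i1 i2, integral_const_mul, integral_div, key2,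
    integral_finsetSum _ fun i _ => hmul _ _ (hmx _) hQm (hb _ (hx i)) hQb,
    integral_finsetSum _ fun i _ => integrable_finsetSum _ fun j _ =>
      hmul _ _ (hmx _) (hmx _) (hb _ (hx i)) (hb _ (hx j))]
  have e1 : ∀ i, ∫ z, ∑ j, φ (x i) z * φ (x j) z ∂ρ = ∑ j, ∫ z, φ (x i) z * φ (x j) z ∂ρ :=
    fun i => integral_finsetSum _ fun j _ =>
      hmul _ _ (hmx _) (hmx _) (hb _ (hx i)) (hb _ (hx j))
  simp only [e1, key1 _ (hx _)]
  simp only [Finset.sum_const, Finset.card_univ, Fintype.card_fin, nsmul_eq_mul]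
  field_simp
  ring

/-- The constant in Stolarsky's principle. -/
def kap (d : ℕ) : ℝ := (∫ y, |y 0| ∂ sigmaMeasure d) / 2

lemma integrable_sigma_of_bound {d : ℕ} (hd : 0 < d) {f : EuclideanSpace ℝ (Fin (d + 1)) → ℝ}
    (hf : Measurable f) (C : ℝ)
    (hC : ∀ x ∈ sphere (0 : EuclideanSpace ℝ (Fin (d + 1))) 1, |f x| ≤ C) :
    Integrable f (sigmaMeasure d) := by
  have := sigma_prob hd
  exact Integrable.of_bound hf.aestronglyMeasurable C ((sigma_ae_mem d).mono fun y hy => hC y hy)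

lemma abs_inner_le_of_mem {d : ℕ} {y : EuclideanSpace ℝ (Fin (d + 1))}
    (hy : y ∈ sphere (0 : EuclideanSpace ℝ (Fin (d + 1))) 1) (v : EuclideanSpace ℝ (Fin (d + 1))) :
    |⟪y, v⟫| ≤ ‖v‖ := by
  have := abs_real_inner_le_norm y v
  have h1 : ‖y‖ = 1 := by simpa using hy
  rwa [h1, one_mul] at this

lemma kap_eq {d : ℕ} (v : EuclideanSpace ℝ (Fin (d + 1))) :
    ∫ y, |⟪y, v⟫| ∂ sigmaMeasure d = 2 * kap d * ‖v‖ := by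
  have hn : ‖v‖ = ‖(‖v‖ • EuclideanSpace.single (0 : Fin (d + 1)) (1 : ℝ))‖ := by
    rw [norm_smul]; simp
  obtain ⟨L, hL⟩ := exists_isometry hn
  have := sigma_integral_invariant L (fun y => |⟪y, L v⟫|)
  simp only [LinearIsometryEquiv.inner_map_map] at this
  rw [this, hL]
  have e : ∀ y : EuclideanSpace ℝ (Fin (d + 1)),
      |⟪y, ‖v‖ • EuclideanSpace.single (0 : Fin (d + 1)) (1 : ℝ)⟫| = ‖v‖ * |y 0| := by
    intro y
    rw [inner_smul_right, abs_mul, abs_norm, EuclideanSpace.inner_single_right]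
    simp
  simp only [e]
  rw [integral_const_mul, kap]; ring

lemma inner_integral_zero {d : ℕ} (v : EuclideanSpace ℝ (Fin (d + 1))) :
    ∫ y, ⟪y, v⟫ ∂ sigmaMeasure d = 0 := by
  have := sigma_integral_invariant (LinearIsometryEquiv.neg ℝ) (fun y => ⟪y, v⟫)
  simp only [LinearIsometryEquiv.coe_neg, inner_neg_left] at this
  rw [integral_neg] at this
  linarith

lemma kap_pos {d : ℕ} (hd : 0 < d) : 0 < kap d := by
  have hprob := sigma_prob hd
  have h1 : ∀ i : Fin (d + 1), ∫ y, |y i| ∂ sigmaMeasure d = 2 * kap d := by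
    intro i
    have := kap_eq (EuclideanSpace.single i (1 : ℝ))
    simpa [EuclideanSpace.inner_single_right] using this
  have hi : ∀ i : Fin (d + 1), Integrable (fun y : EuclideanSpace ℝ (Fin (d + 1)) => |y i|)
      (sigmaMeasure d) := by
    intro i
    refine integrable_sigma_of_bound hd (by fun_prop) 1 fun y hy => ?_
    rw [abs_abs]
    have := PiLp.norm_apply_le y i
    have h1 : ‖y‖ = 1 := by simpa using hy
    rwa [h1] at this
  have h2 : (1 : ℝ) ≤ ∫ y : EuclideanSpace ℝ (Fin (d + 1)), ∑ i, |y i| ∂ sigmaMeasure d := by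
    have : ∫ y : EuclideanSpace ℝ (Fin (d + 1)), (1 : ℝ) ∂ sigmaMeasure d = 1 := by simp
    rw [← this]
    refine integral_mono_ae (integrable_const _) (integrable_finsetSum _ fun i _ => hi i) ?_
    filter_upwards [sigma_ae_mem d] with y hy
    have h1 : ‖y‖ = 1 := by simpa using hy
    have h3 := EuclideanSpace.real_norm_sq_eq y
    have h4 := sum_abs_sq_le (fun i => y i)
    rw [← h3, h1] at h4
    have : 0 ≤ ∑ i, |y i| := by positivity
    nlinarith
  rw [integral_finsetSum _ fun i _ => hi i] at h2
  simp only [h1] at h2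
  simp only [Finset.sum_const, Finset.card_univ, Fintype.card_fin, nsmul_eq_mul] at h2
  by_contra hc
  push Not at hc
  have : ((d + 1 : ℕ) : ℝ) * (2 * kap d) ≤ 0 := mul_nonpos_of_nonneg_of_nonpos (by positivity)
    (by linarith)
  linarith

/-- Average distance on the sphere. -/
def avgDist (d : ℕ) : ℝ :=
  ∫ z, ‖EuclideanSpace.single (0 : Fin (d + 1)) (1 : ℝ) - z‖ ∂ sigmaMeasure d

lemma avgDist_eq {d : ℕ} {x : EuclideanSpace ℝ (Fin (d + 1))}
    (hx : x ∈ sphere (0 : EuclideanSpace ℝ (Fin (d + 1))) 1) :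
    ∫ z, ‖x - z‖ ∂ sigmaMeasure d = avgDist d := by
  have h1 : ‖x‖ = 1 := by simpa using hx
  exact zonal_const (x := x) (by simp [h1]) (fun r => r)

/-- Indicator of the cap. -/
def capInd (d : ℕ) (x : EuclideanSpace ℝ (Fin (d + 1)))
    (z : ℝ × EuclideanSpace ℝ (Fin (d + 1))) : ℝ := if z.1 ≤ ⟪z.2, x⟫ then 1 else 0

lemma capInd_measurable (d : ℕ) : Measurable (Function.uncurry (capInd d)) := by
  unfold capInd Function.uncurry
  refine Measurable.ite (measurableSet_le ?_ ?_) measurable_const measurable_const <;> fun_prop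

lemma one_dim_integral {a b : ℝ} (ha : |a| ≤ 1) (hb : |b| ≤ 1) :
    ∫ t in Set.Icc (-1 : ℝ) 1, (if t ≤ a then (1 : ℝ) else 0) * (if t ≤ b then (1 : ℝ) else 0)
      = 1 + (a + b) / 2 - |a - b| / 2 := by
  have ha := abs_le.1 ha
  have hb := abs_le.1 hb
  have e : ∀ t : ℝ, (if t ≤ a then (1 : ℝ) else 0) * (if t ≤ b then (1 : ℝ) else 0) =
      (Set.Iic (min a b)).indicator (fun _ => (1 : ℝ)) t := by
    intro t
    simp only [Set.indicator, Set.mem_Iic, le_min_iff]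
    split_ifs <;> simp_all
  simp only [e]
  rw [integral_indicator measurableSet_Iic, Measure.restrict_restrict measurableSet_Iic]
  have : Set.Iic (min a b) ∩ Set.Icc (-1 : ℝ) 1 = Set.Icc (-1) (min a b) := by
    ext t
    simp only [Set.mem_inter_iff, Set.mem_Iic, Set.mem_Icc, le_min_iff]
    constructor
    · rintro ⟨⟨h1, h2⟩, h3, h4⟩; exact ⟨h3, h1, h2⟩
    · rintro ⟨h1, h2, h3⟩; exact ⟨⟨h2, h3⟩, h1, by linarith⟩
  rw [this]
  simp only [integral_const, MeasurableSet.univ, measureReal_restrict_apply, Set.univ_inter,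
    Real.volume_real_Icc, smul_eq_mul, mul_one]
  rw [max_eq_left (by have := le_min ha.1 hb.1; linarith)]
  rcases le_total a b with h | h
  · rw [min_eq_left h, abs_of_nonpos (by linarith)]; ring
  · rw [min_eq_right h, abs_of_nonneg (by linarith)]; ring

lemma cap_kernel {d : ℕ} (hd : 0 < d) {x x' : EuclideanSpace ℝ (Fin (d + 1))}
    (hx : x ∈ sphere (0 : EuclideanSpace ℝ (Fin (d + 1))) 1)
    (hx' : x' ∈ sphere (0 : EuclideanSpace ℝ (Fin (d + 1))) 1) :
    ∫ z, capInd d x z * capInd d x' z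
      ∂((volume.restrict (Set.Icc (-1 : ℝ) 1)).prod (sigmaMeasure d)) =
      1 - kap d * ‖x - x'‖ := by
  have hprob := sigma_prob hd
  have hm : ∀ x, Measurable (capInd d x) := fun x =>
    (capInd_measurable d).comp measurable_prodMk_left
  have hInt0 : Integrable (fun z => capInd d x z * capInd d x' z)
      ((volume.restrict (Set.Icc (-1 : ℝ) 1)).prod (sigmaMeasure d)) := by
    refine Integrable.of_bound ((hm x).mul (hm x')).aestronglyMeasurable 1
      (Eventually.of_forall fun z => ?_)
    unfold capInd; split_ifs <;> simp
  rw [integral_prod_symm _ hInt0]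
  have h1 : ‖x‖ = 1 := by simpa using hx
  have h1' : ‖x'‖ = 1 := by simpa using hx'
  have e : ∀ᵐ y ∂ sigmaMeasure d, ∫ t in Set.Icc (-1 : ℝ) 1, capInd d x (t, y) * capInd d x' (t, y)
      = 1 + ⟪y, x + x'⟫ / 2 - |⟪y, x - x'⟫| / 2 := by
    filter_upwards [sigma_ae_mem d] with y hy
    have ha := abs_inner_le_of_mem hy x
    have hb := abs_inner_le_of_mem hy x'
    rw [h1] at ha
    rw [h1'] at hb
    have := one_dim_integral ha hb
    rw [inner_add_right, inner_sub_right]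
    exact this
  rw [integral_congr_ae e]
  have j1 : Integrable (fun y => ⟪y, x + x'⟫) (sigmaMeasure d) :=
    integrable_sigma_of_bound hd (by fun_prop) _ fun y hy => abs_inner_le_of_mem hy _
  have j2 : Integrable (fun y => |⟪y, x - x'⟫|) (sigmaMeasure d) :=
    integrable_sigma_of_bound hd (by fun_prop) _ fun y hy => by
      rw [abs_abs]; exact abs_inner_le_of_mem hy _
  have j3 : Integrable (fun y => 1 + ⟪y, x + x'⟫ / 2) (sigmaMeasure d) :=
    (integrable_const _).add (j1.div_const _)
  rw [integral_sub j3 (j2.div_const _),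
    integral_add (integrable_const _) (j1.div_const _), integral_div, integral_div, kap_eq,
    inner_integral_zero]
  simp
  ring

/-- Stolarsky's invariance principle. -/
lemma stolarsky {d : ℕ} (hd : 0 < d) (N : ℕ) (hN : 0 < N)
    (x : Fin N → EuclideanSpace ℝ (Fin (d + 1)))
    (hx : ∀ k, x k ∈ sphere (0 : EuclideanSpace ℝ (Fin (d + 1))) 1) :
    L2DiscSq d N x = kap d * (avgDist d - (∑ i, ∑ j, ‖x i - x j‖) / (N : ℝ) ^ 2) := by
  have hprob := sigma_prob hd
  have hid : ∀ x : EuclideanSpace ℝ (Fin (d + 1)), 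
      x ∈ sphere (0 : EuclideanSpace ℝ (Fin (d + 1))) 1 →
      Integrable (fun z => ‖x - z‖) (sigmaMeasure d) := by
    intro x hx
    refine integrable_sigma_of_bound hd (by fun_prop) 2 fun y hy => ?_
    have h1 : ‖x‖ = 1 := by simpa using hx
    have h1' : ‖y‖ = 1 := by simpa using hy
    rw [abs_norm]
    linarith [norm_sub_le x y]
  have hq := quad_general hd ((volume.restrict (Set.Icc (-1 : ℝ) 1)).prod (sigmaMeasure d))
    (capInd d) (capInd_measurable d) (fun _ => 1)
    (fun x _ z => by unfold capInd; split_ifs <;> simp) (by simp)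
    (1 - kap d * avgDist d) (by
      intro x hx
      have : ∀ᵐ y ∂ sigmaMeasure d, ∫ z, capInd d x z * capInd d y z
          ∂((volume.restrict (Set.Icc (-1 : ℝ) 1)).prod (sigmaMeasure d)) =
          1 - kap d * ‖x - y‖ := by
        filter_upwards [sigma_ae_mem d] with y hy
        exact cap_kernel hd hx hy
      rw [integral_congr_ae this, integral_sub (integrable_const _) ((hid x hx).const_mul _),
        integral_const_mul, avgDist_eq hx]
      simp) N hN x hx
  have hq2 := hq.2
  rw [integral_prod _ hq.1] at hq2
  have e : L2DiscSq d N x = ∫ t in Set.Icc (-1 : ℝ) 1, ∫ y,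
      ((∑ k, capInd d (x k) (t, y)) / N - ∫ w, capInd d w (t, y) ∂ sigmaMeasure d) ^ 2
        ∂ sigmaMeasure d := by
    unfold L2DiscSq
    congr 1
    funext t
    congr 1
    funext y
    congr 2
    · congr 1
      simp only [capInd]
      rw [Finset.sum_boole, Nat.card_eq_fintype_card, Fintype.card_subtype]
    · have hms : MeasurableSet {z : EuclideanSpace ℝ (Fin (d + 1)) | t ≤ ⟪y, z⟫} :=
        measurableSet_le measurable_const (by fun_prop)
      have : (fun w => capInd d w (t, y)) =
          Set.indicator {z : EuclideanSpace ℝ (Fin (d + 1)) | t ≤ ⟪y, z⟫} (fun _ => (1 : ℝ)) := by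
        funext w; simp [capInd, Set.indicator]
      rw [this, integral_indicator hms]
      simp [Measure.real]
  rw [e, hq2]
  have e2 : ∀ i j, ∫ z, capInd d (x i) z * capInd d (x j) z
      ∂((volume.restrict (Set.Icc (-1 : ℝ) 1)).prod (sigmaMeasure d)) =
      1 - kap d * ‖x i - x j‖ := fun i j => cap_kernel hd (hx i) (hx j)
  simp only [e2, Finset.sum_sub_distrib, ← Finset.mul_sum]
  simp only [Finset.sum_const, Finset.card_univ, Fintype.card_fin, nsmul_eq_mul]
  have hN0 : (N : ℝ) ≠ 0 := by positivity
  field_simp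
  ring


lemma integrable_gauss {V : Type} [NormedAddCommGroup V] [InnerProductSpace ℝ V]
    [FiniteDimensional ℝ V] [MeasurableSpace V] [BorelSpace V] {b : ℝ} (hb : 0 < b) :
    Integrable (fun v : V => rexp (-b * ‖v‖ ^ 2)) := by
  by_contra h
  have h1 := integral_undef h
  rw [GaussianFourier.integral_rexp_neg_mul_sq_norm hb] at h1
  have : 0 < (π / b) ^ ((Module.finrank ℝ V : ℝ) / 2) := Real.rpow_pos_of_pos (by positivity) _
  linarith

/-- Gaussian zonal integral. -/
def gaussInt (d : ℕ) (τ : ℝ) : ℝ :=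
  ∫ z, rexp (-(τ ^ 2 * ‖EuclideanSpace.single (0 : Fin (d + 1)) (1 : ℝ) - z‖ ^ 2)) ∂ sigmaMeasure d

lemma gaussInt_eq {d : ℕ} {x : EuclideanSpace ℝ (Fin (d + 1))}
    (hx : x ∈ sphere (0 : EuclideanSpace ℝ (Fin (d + 1))) 1) (τ : ℝ) :
    ∫ z, rexp (-(τ ^ 2 * ‖x - z‖ ^ 2)) ∂ sigmaMeasure d = gaussInt d τ := by
  have h1 : ‖x‖ = 1 := by simpa using hx
  exact zonal_const (x := x) (by simp [h1]) (fun r => rexp (-(τ ^ 2 * r ^ 2)))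

lemma gauss_pd {d : ℕ} (hd : 0 < d) {τ : ℝ} (hτ : 0 < τ) (N : ℕ) (hN : 0 < N)
    (x : Fin N → EuclideanSpace ℝ (Fin (d + 1)))
    (hx : ∀ k, x k ∈ sphere (0 : EuclideanSpace ℝ (Fin (d + 1))) 1) :
    gaussInt d τ ≤ (∑ i, ∑ j, rexp (-(τ ^ 2 * ‖x i - x j‖ ^ 2))) / (N : ℝ) ^ 2 := by
  have hprob := sigma_prob hd
  set C : ℝ := ∫ z : EuclideanSpace ℝ (Fin (d + 1)), rexp (-(4 * τ ^ 2) * ‖z‖ ^ 2) with hC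
  have hC0 : 0 < C := by
    rw [hC, GaussianFourier.integral_rexp_neg_mul_sq_norm (by positivity)]
    exact Real.rpow_pos_of_pos (by positivity) _
  have hk : ∀ x y : EuclideanSpace ℝ (Fin (d + 1)),
      ∫ z, rexp (-(2 * τ ^ 2) * ‖x - z‖ ^ 2) * rexp (-(2 * τ ^ 2) * ‖y - z‖ ^ 2) =
      rexp (-(τ ^ 2 * ‖x - y‖ ^ 2)) * C := by
    intro x y
    have e : ∀ z, rexp (-(2 * τ ^ 2) * ‖x - z‖ ^ 2) * rexp (-(2 * τ ^ 2) * ‖y - z‖ ^ 2) =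
        rexp (-(τ ^ 2 * ‖x - y‖ ^ 2)) *
          rexp (-(4 * τ ^ 2) * ‖z - (1 / 2 : ℝ) • (x + y)‖ ^ 2) := by
      intro z
      rw [← Real.exp_add, ← Real.exp_add]
      congr 1
      have p := parallelogram_law_with_norm ℝ (x - z) (y - z)
      have e1 : x - z - (y - z) = x - y := by abel
      have e2 : x - z + (y - z) = (-2 : ℝ) • (z - (1 / 2 : ℝ) • (x + y)) := by
        rw [smul_sub, smul_smul]; norm_num
        rw [show (2 : ℝ) • z = z + z from two_smul ℝ z]; abel
      rw [e1, e2, norm_smul, show ‖(-2 : ℝ)‖ = 2 by norm_num] at p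
      linear_combination τ ^ 2 * p
    simp only [e]
    rw [integral_const_mul, hC,
      integral_sub_right_eq_self (fun z : EuclideanSpace ℝ (Fin (d + 1)) =>
        rexp (-(4 * τ ^ 2) * ‖z‖ ^ 2))]
  have hq := quad_general hd (volume : Measure (EuclideanSpace ℝ (Fin (d + 1))))
    (fun x z => rexp (-(2 * τ ^ 2) * ‖x - z‖ ^ 2)) (by unfold Function.uncurry; fun_prop)
    (fun z => rexp (2 * τ ^ 2) * rexp (-τ ^ 2 * ‖z‖ ^ 2)) (by
      intro x hx z
      have h1 : ‖x‖ = 1 := by simpa using hx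
      rw [abs_of_pos (Real.exp_pos _), ← Real.exp_add]
      apply Real.exp_le_exp.2
      have h2 : ‖z‖ ≤ ‖x - z‖ + 1 := by
        have := norm_sub_norm_le z x
        rw [norm_sub_rev] at this; linarith
      have h3 : ‖z‖ ^ 2 ≤ 2 * ‖x - z‖ ^ 2 + 2 := by
        nlinarith [norm_nonneg z, norm_nonneg (x - z), sq_nonneg (‖x - z‖ - 1)]
      nlinarith [sq_nonneg τ])
    (by
      have e : ∀ z : EuclideanSpace ℝ (Fin (d + 1)),
          (rexp (2 * τ ^ 2) * rexp (-τ ^ 2 * ‖z‖ ^ 2)) ^ 2 =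
          rexp (2 * τ ^ 2) ^ 2 * rexp (-(2 * τ ^ 2) * ‖z‖ ^ 2) := by
        intro z
        rw [mul_pow, ← Real.exp_nat_mul (-τ ^ 2 * ‖z‖ ^ 2)]
        congr 2; push_cast; ring
      simp only [e]
      exact (integrable_gauss (by positivity)).const_mul _)
    (gaussInt d τ * C) (by
      intro x hx
      simp only [hk]
      rw [integral_mul_const, gaussInt_eq hx]) N hN x hx
  have h0 := hq.2
  simp only [hk, ← Finset.sum_mul] at h0
  have h1 : 0 ≤ (∑ i, ∑ j, rexp (-(τ ^ 2 * ‖x i - x j‖ ^ 2))) * C / (N : ℝ) ^ 2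
      - gaussInt d τ * C := by
    rw [← h0]; exact integral_nonneg fun z => sq_nonneg _
  have h2 : gaussInt d τ * C ≤
      ((∑ i, ∑ j, rexp (-(τ ^ 2 * ‖x i - x j‖ ^ 2))) / (N : ℝ) ^ 2) * C := by
    rw [div_mul_eq_mul_div]; linarith
  exact le_of_mul_le_mul_right h2 hC0

lemma gauss_upper {d : ℕ} (hd : 0 < d) :
    ∃ C : ℝ, 0 < C ∧ ∀ τ : ℝ, 0 < τ → gaussInt d τ ≤ C / τ ^ d := by
  have hprob := sigma_prob hd
  set B := closedBall (0 : EuclideanSpace ℝ (Fin d)) 1 with hB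
  set V := (volume B).toReal with hV
  have hV0 : 0 < V := ENNReal.toReal_pos (measure_closedBall_pos _ _ one_pos).ne'
    measure_closedBall_lt_top.ne
  refine ⟨π ^ ((d : ℝ) / 2) / V, by positivity, fun τ hτ => ?_⟩
  have hfin : IsFiniteMeasure (volume.restrict B) :=
    ⟨by rw [Measure.restrict_apply_univ]; exact measure_closedBall_lt_top⟩
  have hlm := measurable_liftMap d
  have h1 : gaussInt d τ * V = ∫ u in B, ∫ z, rexp (-(τ ^ 2 * ‖liftMap d u - z‖ ^ 2))
      ∂ sigmaMeasure d := by
    have : ∫ u in B, ∫ z, rexp (-(τ ^ 2 * ‖liftMap d u - z‖ ^ 2)) ∂ sigmaMeasure d =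
        ∫ u in B, gaussInt d τ := by
      refine setIntegral_congr_fun isClosed_closedBall.measurableSet fun u hu => ?_
      exact gaussInt_eq (liftMap_mem d (by simpa [hB] using hu)) τ
    rw [this]
    simp [Measure.real, hV, mul_comm]
  have h2 : ∫ u in B, ∫ z, rexp (-(τ ^ 2 * ‖liftMap d u - z‖ ^ 2)) ∂ sigmaMeasure d =
      ∫ z, (∫ u in B, rexp (-(τ ^ 2 * ‖liftMap d u - z‖ ^ 2))) ∂ sigmaMeasure d := by
    refine integral_integral_swap ?_
    refine Integrable.of_bound (C := 1) ?_ (Eventually.of_forall fun p => ?_)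
    · apply Measurable.aestronglyMeasurable
      unfold Function.uncurry
      fun_prop
    · unfold Function.uncurry
      rw [Real.norm_eq_abs, abs_of_pos (Real.exp_pos _)]
      exact Real.exp_le_one_iff.2 (by simp; positivity)
  have h3 : ∀ z : EuclideanSpace ℝ (Fin (d + 1)),
      ∫ u in B, rexp (-(τ ^ 2 * ‖liftMap d u - z‖ ^ 2)) ≤ π ^ ((d : ℝ) / 2) / τ ^ d := by
    intro z
    set w : EuclideanSpace ℝ (Fin d) := WithLp.toLp 2 (fun j => z j.castSucc) with hw
    have hg : Integrable (fun u : EuclideanSpace ℝ (Fin d) => rexp (-τ ^ 2 * ‖u - w‖ ^ 2)) := by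
      have := (integrable_gauss (V := EuclideanSpace ℝ (Fin d)) (b := τ ^ 2)
        (by positivity)).comp_sub_right w
      exact this
    calc ∫ u in B, rexp (-(τ ^ 2 * ‖liftMap d u - z‖ ^ 2))
        ≤ ∫ u in B, rexp (-τ ^ 2 * ‖u - w‖ ^ 2) := by
          refine integral_mono ?_ hg.integrableOn fun u => ?_
          · refine Integrable.of_bound (C := 1) ?_ (Eventually.of_forall fun p => ?_)
            · apply Measurable.aestronglyMeasurable
              fun_prop
            · rw [Real.norm_eq_abs, abs_of_pos (Real.exp_pos _)]
              exact Real.exp_le_one_iff.2 (by simp; positivity)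
          · apply Real.exp_le_exp.2
            have : ‖u - w‖ ^ 2 ≤ ‖liftMap d u - z‖ ^ 2 := by
              rw [EuclideanSpace.real_norm_sq_eq, EuclideanSpace.real_norm_sq_eq,
                Fin.sum_univ_castSucc]
              simp only [PiLp.sub_apply, liftMap_castSucc, hw]
              nlinarith [sq_nonneg (liftMap d u (Fin.last d) - z (Fin.last d))]
            nlinarith [sq_nonneg τ]
      _ ≤ ∫ u, rexp (-τ ^ 2 * ‖u - w‖ ^ 2) :=
          setIntegral_le_integral hg (Eventually.of_forall fun u => (Real.exp_pos _).le)
      _ = ∫ u : EuclideanSpace ℝ (Fin d), rexp (-τ ^ 2 * ‖u‖ ^ 2) :=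
          integral_sub_right_eq_self (fun u : EuclideanSpace ℝ (Fin d) =>
            rexp (-τ ^ 2 * ‖u‖ ^ 2)) w
      _ = π ^ ((d : ℝ) / 2) / τ ^ d := by
          rw [GaussianFourier.integral_rexp_neg_mul_sq_norm (by positivity),
            finrank_euclideanSpace_fin, Real.div_rpow (by positivity) (by positivity)]
          congr 1
          rw [← Real.rpow_natCast τ 2, ← Real.rpow_mul hτ.le, ← Real.rpow_natCast τ d]
          congr 1; push_cast; ring
  have h4 : gaussInt d τ * V ≤ π ^ ((d : ℝ) / 2) / τ ^ d := by
    rw [h1, h2]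
    have : ∫ z : EuclideanSpace ℝ (Fin (d + 1)), π ^ ((d : ℝ) / 2) / τ ^ d ∂ sigmaMeasure d
      = π ^ ((d : ℝ) / 2) / τ ^ d := by simp
    rw [← this]
    refine integral_mono_of_nonneg (Eventually.of_forall fun z => ?_) (integrable_const _)
      (Eventually.of_forall fun z => h3 z)
    exact integral_nonneg fun u => (Real.exp_pos _).le
  rw [div_div, mul_comm V, ← div_div, le_div_iff₀ hV0]
  exact h4

/-- Radial profile. -/
def radF (r τ : ℝ) : ℝ := (1 - rexp (-(τ ^ 2 * r ^ 2))) / τ ^ 2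

lemma radF_nonneg (r τ : ℝ) : 0 ≤ radF r τ := by
  unfold radF
  refine div_nonneg ?_ (sq_nonneg _)
  have : rexp (-(τ ^ 2 * r ^ 2)) ≤ 1 := Real.exp_le_one_iff.2 (by simp; positivity)
  linarith

lemma radF_mono {r s : ℝ} (hr : 0 ≤ r) (h : r ≤ s) (τ : ℝ) : radF r τ ≤ radF s τ := by
  unfold radF
  have : r ^ 2 ≤ s ^ 2 := by gcongr
  gcongr

lemma radF_measurable : Measurable (Function.uncurry radF) := by
  unfold radF Function.uncurry
  fun_prop

lemma radF_one_integrable : IntegrableOn (radF 1) (Set.Ioi 0) := by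
  have h := (integrable_inv_one_add_sq.const_mul 2).integrableOn (s := Set.Ioi (0 : ℝ))
  refine Integrable.mono' h (radF_measurable.comp measurable_prodMk_left).aestronglyMeasurable ?_
  refine (ae_restrict_mem measurableSet_Ioi).mono fun τ hτ => ?_
  have hτ : 0 < τ := hτ
  rw [Real.norm_eq_abs, abs_of_nonneg (radF_nonneg _ _)]
  unfold radF
  rw [← div_eq_mul_inv, div_le_div_iff₀ (by positivity) (by positivity)]
  have h1 := Real.add_one_le_exp (-(τ ^ 2 * 1 ^ 2))
  have h2 := Real.exp_pos (-(τ ^ 2 * 1 ^ 2))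
  nlinarith [sq_nonneg τ, mul_pos h2 (by positivity : 0 < τ ^ 2)]

lemma radF_scale {r : ℝ} (hr : 0 < r) (τ : ℝ) : radF r τ = r ^ 2 * radF 1 (r * τ) := by
  unfold radF
  by_cases h : τ = 0
  · simp [h]
  · rw [one_pow, mul_one]
    field_simp

lemma radF_integrable {r : ℝ} (hr : 0 ≤ r) : IntegrableOn (radF r) (Set.Ioi 0) := by
  rcases hr.eq_or_lt with h | h
  · subst h
    have : radF 0 = fun _ => 0 := by funext τ; simp [radF]
    rw [this]; exact integrableOn_zero
  · have e : radF r = fun τ => r ^ 2 * radF 1 (r * τ) := funext (radF_scale h)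
    rw [e]
    have := (integrableOn_Ioi_comp_mul_left_iff (radF 1) 0 h).2 (by simpa using radF_one_integrable)
    exact this.const_mul _

def radC : ℝ := ∫ τ in Set.Ioi 0, radF 1 τ

lemma radF_integral {r : ℝ} (hr : 0 ≤ r) : ∫ τ in Set.Ioi 0, radF r τ = radC * r := by
  rcases hr.eq_or_lt with h | h
  · subst h
    simp [radF]
  · simp only [radF_scale h]
    rw [integral_const_mul, integral_comp_mul_left_Ioi _ _ h, radC]
    simp only [mul_zero, smul_eq_mul]
    field_simp

lemma radC_pos : 0 < radC := by
  unfold radC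
  rw [setIntegral_pos_iff_support_of_nonneg_ae (Eventually.of_forall fun τ => radF_nonneg 1 τ)
    radF_one_integrable]
  have : Set.Ioi (0 : ℝ) ⊆ Function.support (radF 1) ∩ Set.Ioi 0 := by
    intro τ hτ
    refine ⟨?_, hτ⟩
    have hτ : 0 < τ := hτ
    have h : rexp (-(τ ^ 2 * 1 ^ 2)) < 1 := Real.exp_lt_one_iff.2 (by simp; positivity)
    have : 0 < radF 1 τ := by
      unfold radF
      exact div_pos (by linarith) (by positivity)
    exact this.ne'
  refine lt_of_lt_of_le ?_ (measure_mono this)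
  simp

lemma integral_inv_sq_Ioi {a : ℝ} (ha : 0 < a) :
    IntegrableOn (fun τ : ℝ => (τ ^ 2)⁻¹) (Set.Ioi a) ∧ ∫ τ in Set.Ioi a, (τ ^ 2)⁻¹ = a⁻¹ := by
  have e : Set.EqOn (fun τ : ℝ => (τ ^ 2)⁻¹) (fun τ : ℝ => τ ^ (-2 : ℝ)) (Set.Ioi a) := by
    intro τ hτ
    have : 0 < τ := ha.trans hτ
    simp only
    rw [Real.rpow_neg this.le]; norm_cast
  constructor
  · exact (integrableOn_Ioi_rpow_of_lt (by norm_num) ha).congr_fun e.symm measurableSet_Ioi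
  · rw [setIntegral_congr_fun measurableSet_Ioi e, integral_Ioi_rpow_of_lt (by norm_num) ha]
    norm_num
    rw [Real.rpow_neg_one]

set_option maxHeartbeats 1000000 in
lemma energy_lower {d : ℕ} (hd : 0 < d) : ∃ c : ℝ, 0 < c ∧ ∀ (N : ℕ), 0 < N →
    ∀ x : Fin N → EuclideanSpace ℝ (Fin (d + 1)),
    (∀ k, x k ∈ sphere (0 : EuclideanSpace ℝ (Fin (d + 1))) 1) →
    c * (N : ℝ) ^ (-1 - 1 / (d : ℝ)) ≤ avgDist d - (∑ i, ∑ j, ‖x i - x j‖) / (N : ℝ) ^ 2 := by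
  have hprob := sigma_prob hd
  obtain ⟨C, hC, hG⟩ := gauss_upper hd
  refine ⟨1 / (2 * (2 * C) ^ (1 / (d : ℝ)) * radC), ?_, fun N hN x hx => ?_⟩
  · have := radC_pos
    positivity
  have hN0 : (0 : ℝ) < N := by exact_mod_cast hN
  set e : EuclideanSpace ℝ (Fin (d + 1)) := EuclideanSpace.single (0 : Fin (d + 1)) (1 : ℝ) with he
  have hes : ‖e‖ = 1 := by simp [he]
  -- the continuous part
  have hInt : Integrable (Function.uncurry fun (z : EuclideanSpace ℝ (Fin (d + 1))) (τ : ℝ) =>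
      radF ‖e - z‖ τ) ((sigmaMeasure d).prod (volume.restrict (Set.Ioi 0))) := by
    have h2 := (radF_integrable (r := 2) (by norm_num)).comp_snd (sigmaMeasure d)
    refine h2.mono' ?_ ?_
    · apply Measurable.aestronglyMeasurable
      unfold Function.uncurry radF
      fun_prop
    · have : ∀ᵐ p ∂((sigmaMeasure d).prod (volume.restrict (Set.Ioi (0 : ℝ)))),
          p.1 ∈ sphere (0 : EuclideanSpace ℝ (Fin (d + 1))) 1 :=
        Measure.quasiMeasurePreserving_fst.ae (sigma_ae_mem d)
      filter_upwards [this] with p hp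
      have h1 : ‖p.1‖ = 1 := by simpa using hp
      simp only [Function.uncurry]
      rw [Real.norm_eq_abs, abs_of_nonneg (radF_nonneg _ _)]
      exact radF_mono (norm_nonneg _) (by linarith [norm_sub_le e p.1]) _
  have hexp : Integrable (fun z => (1 : ℝ)) (sigmaMeasure d) := integrable_const _
  have hinner : ∀ τ : ℝ, ∫ z, radF ‖e - z‖ τ ∂ sigmaMeasure d = (1 - gaussInt d τ) / τ ^ 2 := by
    intro τ
    unfold radF gaussInt
    rw [integral_div, integral_sub (integrable_const _)]
    · simp [he]
    · refine Integrable.of_bound (C := 1) ?_ (Eventually.of_forall fun p => ?_)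
      · apply Measurable.aestronglyMeasurable
        fun_prop
      · rw [Real.norm_eq_abs, abs_of_pos (Real.exp_pos _)]
        exact Real.exp_le_one_iff.2 (by simp; positivity)
  have hA : radC * avgDist d = ∫ τ in Set.Ioi 0, (1 - gaussInt d τ) / τ ^ 2 := by
    simp only [← hinner]
    rw [← integral_integral_swap hInt]
    simp only [radF_integral (norm_nonneg _)]
    rw [integral_const_mul]; rfl
  have hAi : IntegrableOn (fun τ => (1 - gaussInt d τ) / τ ^ 2) (Set.Ioi 0) := by
    simp only [← hinner]
    exact hInt.integral_prod_right
  -- the discrete part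
  set T : ℝ → ℝ := fun τ => ∑ i, ∑ j, rexp (-(τ ^ 2 * ‖x i - x j‖ ^ 2)) with hT
  have hBpt : ∀ τ, (∑ i, ∑ j, radF ‖x i - x j‖ τ) / (N : ℝ) ^ 2 =
      (1 - T τ / (N : ℝ) ^ 2) / τ ^ 2 := by
    intro τ
    simp only [radF, hT, ← Finset.sum_div, Finset.sum_sub_distrib]
    simp only [Finset.sum_const, Finset.card_univ, Fintype.card_fin, nsmul_eq_mul]
    by_cases h : τ = 0
    · simp [h]
    · field_simp
  have hBi : IntegrableOn (fun τ => (1 - T τ / (N : ℝ) ^ 2) / τ ^ 2) (Set.Ioi 0) := by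
    simp only [← hBpt]
    exact (integrable_finsetSum _ fun i _ => integrable_finsetSum _ fun j _ =>
      radF_integrable (norm_nonneg _)).div_const _
  have hB : radC * ((∑ i, ∑ j, ‖x i - x j‖) / (N : ℝ) ^ 2) =
      ∫ τ in Set.Ioi 0, (1 - T τ / (N : ℝ) ^ 2) / τ ^ 2 := by
    simp only [← hBpt]
    rw [integral_div, integral_finsetSum _ fun i _ => integrable_finsetSum _ fun j _ =>
      radF_integrable (norm_nonneg _)]
    have : ∀ i, ∫ τ in Set.Ioi 0, ∑ j, radF ‖x i - x j‖ τ = ∑ j, radC * ‖x i - x j‖ := by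
      intro i
      rw [integral_finsetSum _ fun j _ => radF_integrable (norm_nonneg _)]
      simp only [radF_integral (norm_nonneg _)]
    simp only [this, ← Finset.mul_sum]
    ring
  set D : ℝ → ℝ := fun τ => (1 - gaussInt d τ) / τ ^ 2 - (1 - T τ / (N : ℝ) ^ 2) / τ ^ 2 with hD
  have hDi : IntegrableOn D (Set.Ioi 0) := hAi.sub hBi
  have hDint : radC * (avgDist d - (∑ i, ∑ j, ‖x i - x j‖) / (N : ℝ) ^ 2) =
      ∫ τ in Set.Ioi 0, D τ := by
    rw [mul_sub, hA, hB, ← integral_sub hAi hBi]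
  have hDeq : ∀ τ, D τ = (T τ / (N : ℝ) ^ 2 - gaussInt d τ) * (τ ^ 2)⁻¹ := by
    intro τ; simp only [hD]; ring
  have hDnn : ∀ τ ∈ Set.Ioi (0 : ℝ), 0 ≤ D τ := by
    intro τ hτ
    rw [hDeq]
    have := gauss_pd hd hτ N hN x hx
    exact mul_nonneg (by simp only [hT]; linarith) (by positivity)
  set a : ℝ := (2 * C * N) ^ (1 / (d : ℝ)) with ha
  have ha0 : 0 < a := by positivity
  have had : a ^ d = 2 * C * N := by
    rw [ha, ← Real.rpow_natCast, ← Real.rpow_mul (by positivity)]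
    rw [one_div, inv_mul_cancel₀ (by positivity), Real.rpow_one]
  have hDlow : ∀ τ ∈ Set.Ioi a, 1 / (2 * N) * (τ ^ 2)⁻¹ ≤ D τ := by
    intro τ hτ
    have hτa : a < τ := hτ
    have hτ0 : 0 < τ := ha0.trans hτa
    rw [hDeq]
    refine mul_le_mul_of_nonneg_right ?_ (by positivity)
    have h1 : gaussInt d τ ≤ 1 / (2 * N) := by
      refine (hG τ hτ0).trans ?_
      have : 2 * C * N ≤ τ ^ d := by rw [← had]; gcongr
      rw [div_le_div_iff₀ (by positivity) (by positivity)]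
      linarith
    have h2 : (N : ℝ) ≤ T τ := by
      have : ∀ i : Fin N, 1 ≤ ∑ j, rexp (-(τ ^ 2 * ‖x i - x j‖ ^ 2)) := by
        intro i
        have := Finset.single_le_sum (f := fun j => rexp (-(τ ^ 2 * ‖x i - x j‖ ^ 2)))
          (fun j _ => (Real.exp_pos _).le) (Finset.mem_univ i)
        simpa using this
      calc (N : ℝ) = ∑ i : Fin N, (1 : ℝ) := by simp
        _ ≤ T τ := Finset.sum_le_sum fun i _ => this i
    have h3 : 1 / (N : ℝ) ≤ T τ / (N : ℝ) ^ 2 := by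
      rw [div_le_div_iff₀ (by positivity) (by positivity)]
      nlinarith
    have h4 : 1 / (N : ℝ) = 1 / (2 * N) + 1 / (2 * N) := by field_simp; norm_num
    linarith
  have hsub : Set.Ioi a ⊆ Set.Ioi 0 := Set.Ioi_subset_Ioi ha0.le
  have hfinal : 1 / (2 * N) * a⁻¹ ≤ ∫ τ in Set.Ioi 0, D τ := by
    rw [← (integral_inv_sq_Ioi ha0).2, ← integral_const_mul]
    calc ∫ τ in Set.Ioi a, 1 / (2 * N) * (τ ^ 2)⁻¹ ≤ ∫ τ in Set.Ioi a, D τ :=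
          setIntegral_mono_on ((integral_inv_sq_Ioi ha0).1.const_mul _) (hDi.mono_set hsub)
            measurableSet_Ioi hDlow
      _ ≤ ∫ τ in Set.Ioi 0, D τ :=
          setIntegral_mono_set hDi ((ae_restrict_mem measurableSet_Ioi).mono hDnn)
            (LE.le.eventuallyLE hsub)
  rw [← hDint] at hfinal
  have hr := radC_pos
  have e1 : 1 / (2 * (2 * C) ^ (1 / (d : ℝ)) * radC) * (N : ℝ) ^ (-1 - 1 / (d : ℝ)) =
      (1 / (2 * N) * a⁻¹) / radC := by
    rw [ha, Real.mul_rpow (by positivity) hN0.le, sub_eq_add_neg, Real.rpow_add hN0,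
      Real.rpow_neg_one, Real.rpow_neg hN0.le]
    field_simp
  rw [e1, div_le_iff₀ hr]
  linarith


lemma cut_measure {E : Type} [MeasurableSpace E] (μ : Measure E) [IsFiniteMeasure μ] (f : E → ℝ)
    (hf : Measurable f) (a b : ℝ) (hab : ∀ᵐ x ∂μ, a ≤ f x ∧ f x ≤ b) (c : ℝ≥0∞) (hc0 : 0 < c)
    (hc : c ≤ μ Set.univ) :
    ∃ (t : ℝ) (μ1 μ2 : Measure E), a ≤ t ∧ t ≤ b ∧ μ1 + μ2 = μ ∧ μ1 Set.univ = c ∧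
      (∀ᵐ x ∂μ1, f x ≤ t) ∧ (∀ᵐ x ∂μ2, t ≤ f x) := by
  set T : Set ℝ := {s | c ≤ μ {x | f x ≤ s}} with hT
  have hbT : b ∈ T := by
    have : μ {x | f x ≤ b} = μ Set.univ := by
      refine measure_congr ?_
      rw [eventuallyEq_set]
      filter_upwards [hab] with x hx
      simp [hx.2]
    simp only [hT, Set.mem_setOf_eq, this, hc]
  have hTa : ∀ s ∈ T, a ≤ s := by
    intro s hs
    by_contra h
    push Not at h
    have : μ {x | f x ≤ s} = 0 := by
      rw [measure_eq_zero_iff_ae_notMem]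
      filter_upwards [hab] with x hx
      simp only [Set.mem_setOf_eq, not_le]
      linarith
    simp only [hT, Set.mem_setOf_eq, this] at hs
    exact absurd hs (not_le.2 hc0)
  have hbdd : BddBelow T := ⟨a, hTa⟩
  set t := sInf T with ht
  have hat : a ≤ t := le_csInf ⟨b, hbT⟩ hTa
  have htb : t ≤ b := csInf_le hbdd hbT
  have hmono : ∀ s s', s ≤ s' → s ∈ T → s' ∈ T := fun s s' h hs =>
    le_trans hs (measure_mono fun x hx => le_trans hx h)
  have hms : ∀ s, MeasurableSet {x | f x ≤ s} := fun s => measurableSet_le hf measurable_const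
  have htT : c ≤ μ {x | f x ≤ t} := by
    have e : {x | f x ≤ t} = ⋂ n : ℕ, {x | f x ≤ t + 1 / ((n : ℝ) + 1)} := by
      ext x
      simp only [Set.mem_setOf_eq, Set.mem_iInter]
      constructor
      · intro h n
        have : (0 : ℝ) < 1 / ((n : ℝ) + 1) := by positivity
        linarith
      · intro h
        refine le_of_forall_pos_lt_add fun ε hε => ?_
        obtain ⟨n, hn⟩ := exists_nat_one_div_lt hε
        linarith [h n]
    have hanti : Antitone fun n : ℕ => {x | f x ≤ t + 1 / ((n : ℝ) + 1)} := by
      intro n k hnk x hx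
      simp only [Set.mem_setOf_eq] at hx ⊢
      have : 1 / ((k : ℝ) + 1) ≤ 1 / ((n : ℝ) + 1) := by gcongr
      linarith
    rw [e, hanti.measure_iInter (fun n => (hms _).nullMeasurableSet) ⟨0, measure_ne_top _ _⟩]
    refine le_iInf fun n => ?_
    have hpos : (0 : ℝ) < 1 / ((n : ℝ) + 1) := by positivity
    obtain ⟨s, hs, hs'⟩ := exists_lt_of_csInf_lt ⟨b, hbT⟩
      (show sInf T < t + 1 / ((n : ℝ) + 1) by rw [← ht]; linarith)
    exact hmono s _ hs'.le hs
  have hlt : μ {x | f x < t} ≤ c := by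
    have e : {x | f x < t} = ⋃ n : ℕ, {x | f x ≤ t - 1 / ((n : ℝ) + 1)} := by
      ext x
      simp only [Set.mem_setOf_eq, Set.mem_iUnion]
      constructor
      · intro h
        obtain ⟨n, hn⟩ := exists_nat_one_div_lt (sub_pos.2 h)
        exact ⟨n, by linarith⟩
      · rintro ⟨n, hn⟩
        have : (0 : ℝ) < 1 / ((n : ℝ) + 1) := by positivity
        linarith
    have hm : Monotone fun n : ℕ => {x | f x ≤ t - 1 / ((n : ℝ) + 1)} := by
      intro n k hnk x hx
      simp only [Set.mem_setOf_eq] at hx ⊢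
      have : 1 / ((k : ℝ) + 1) ≤ 1 / ((n : ℝ) + 1) := by gcongr
      linarith
    rw [e, hm.measure_iUnion]
    refine iSup_le fun n => ?_
    have hpos : (0 : ℝ) < 1 / ((n : ℝ) + 1) := by positivity
    by_contra h
    push Not at h
    have : t ≤ t - 1 / ((n : ℝ) + 1) := csInf_le hbdd h.le
    linarith
  have m1 : MeasurableSet {x | f x < t} := measurableSet_lt hf measurable_const
  have m2 : MeasurableSet {x | f x = t} := measurableSet_eq_fun hf measurable_const
  have m3 : MeasurableSet {x | t < f x} := measurableSet_lt measurable_const hf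
  have d12 : Disjoint {x | f x < t} {x | f x = t} := by
    rw [Set.disjoint_left]; intro x hx hx'; simp only [Set.mem_setOf_eq] at hx hx'; linarith
  have u12 : {x | f x < t} ∪ {x | f x = t} = {x | f x ≤ t} := by
    ext x; simp [le_iff_lt_or_eq]
  have d3 : Disjoint {x | f x ≤ t} {x | t < f x} := by
    rw [Set.disjoint_left]; intro x hx hx'; simp only [Set.mem_setOf_eq] at hx hx'; linarith
  have u3 : {x | f x ≤ t} ∪ {x | t < f x} = Set.univ := by
    ext x; simp [le_or_gt]
  have hsum : μ = μ.restrict {x | f x < t} + μ.restrict {x | f x = t} +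
      μ.restrict {x | t < f x} := by
    rw [← Measure.restrict_union d12 m2, u12, ← Measure.restrict_union d3 m3, u3,
      Measure.restrict_univ]
  set p := μ {x | f x < t} with hp
  set q := μ {x | f x = t} with hq
  have hpq : c ≤ p + q := by
    rw [hp, hq, ← measure_union d12 m2, u12]; exact htT
  have hptop : p ≠ ∞ := measure_ne_top _ _
  have hqtop : q ≠ ∞ := measure_ne_top _ _
  obtain ⟨θ, hθ1, hθ⟩ : ∃ θ : ℝ≥0∞, θ ≤ 1 ∧ p + θ * q = c := by
    by_cases h0 : q = 0
    · refine ⟨0, zero_le_one, ?_⟩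
      rw [h0, add_zero] at hpq
      rw [zero_mul, add_zero]
      exact le_antisymm hlt hpq
    · refine ⟨(c - p) / q, ?_, ?_⟩
      · rw [ENNReal.div_le_iff h0 hqtop, one_mul]
        exact tsub_le_iff_left.2 hpq
      · rw [ENNReal.div_mul_cancel h0 hqtop]
        exact add_tsub_cancel_of_le hlt
  refine ⟨t, μ.restrict {x | f x < t} + θ • μ.restrict {x | f x = t},
    (1 - θ) • μ.restrict {x | f x = t} + μ.restrict {x | t < f x}, hat, htb, ?_, ?_, ?_, ?_⟩
  · conv_rhs => rw [hsum]
    have : μ.restrict {x | f x = t} =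
        θ • μ.restrict {x | f x = t} + (1 - θ) • μ.restrict {x | f x = t} := by
      rw [← add_smul, add_tsub_cancel_of_le hθ1, one_smul]
    conv_rhs => rw [this]
    abel
  · simp only [Measure.add_apply, Measure.smul_apply, Measure.restrict_apply_univ, smul_eq_mul]
    exact hθ
  · rw [ae_add_measure_iff]
    refine ⟨(ae_restrict_mem m1).mono fun x hx => le_of_lt hx, ?_⟩
    exact Measure.ae_smul_measure ((ae_restrict_mem m2).mono fun x hx => le_of_eq hx) _
  · rw [ae_add_measure_iff]
    refine ⟨?_, (ae_restrict_mem m3).mono fun x hx => le_of_lt hx⟩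
    exact Measure.ae_smul_measure ((ae_restrict_mem m2).mono fun x hx => le_of_eq (Eq.symm hx)) _

/-- `μ` splits into `n` probability measures with total oscillation at most `B`. -/
def GoodPart {E : Type} [MeasurableSpace E] (f : ℕ → E → ℝ) (J : ℕ) (μ : Measure E) (n : ℕ)
    (B : ℝ) : Prop :=
  ∃ (ν : Fin n → Measure E) (D : Fin n → ℝ) (S : Fin n → Set E),
    (∀ i, ν i Set.univ = 1) ∧ (∑ i, ν i = μ) ∧ (∑ i, D i ≤ B) ∧ (∀ i, ∀ᵐ x ∂(ν i), x ∈ S i) ∧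
    ∀ i, ∀ x ∈ S i, ∀ y ∈ S i, ∑ l ∈ Finset.range J, |f l x - f l y| ≤ D i

lemma ae_of_sum_eq {E : Type} [MeasurableSpace E] {n : ℕ} {ν : Fin n → Measure E} {μ : Measure E}
    (h : ∑ i, ν i = μ) {p : E → Prop} (hp : ∀ᵐ x ∂μ, p x) (i : Fin n) : ∀ᵐ x ∂(ν i), p x := by
  have : ν i ≤ μ := by
    rw [← h]
    exact Finset.single_le_sum (f := ν) (fun j _ => Measure.zero_le _) (Finset.mem_univ i)
  exact (Measure.absolutelyContinuous_of_le this).ae_le hp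

lemma GoodPart.append {E : Type} [MeasurableSpace E] {f : ℕ → E → ℝ} {J : ℕ} {μ μ' : Measure E}
    {n n' : ℕ} {B B' : ℝ} (h : GoodPart f J μ n B) (h' : GoodPart f J μ' n' B') :
    GoodPart f J (μ + μ') (n + n') (B + B') := by
  obtain ⟨ν, D, S, h1, h2, h3, h4, h5⟩ := h
  obtain ⟨ν', D', S', h1', h2', h3', h4', h5'⟩ := h'
  refine ⟨Fin.append ν ν', Fin.append D D', Fin.append S S', ?_, ?_, ?_, ?_, ?_⟩
  · refine Fin.addCases (fun i => ?_) (fun i => ?_)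
    · rw [Fin.append_left]; exact h1 i
    · rw [Fin.append_right]; exact h1' i
  · rw [Fin.sum_univ_add]
    simp only [Fin.append_left, Fin.append_right, h2, h2']
  · rw [Fin.sum_univ_add]
    simp only [Fin.append_left, Fin.append_right]
    linarith
  · refine Fin.addCases (fun i => ?_) (fun i => ?_)
    · simp only [Fin.append_left]; exact h4 i
    · simp only [Fin.append_right]; exact h4' i
  · refine Fin.addCases (fun i => ?_) (fun i => ?_)
    · simp only [Fin.append_left]; exact h5 i
    · simp only [Fin.append_right]; exact h5' i

lemma GoodPart.mono {E : Type} [MeasurableSpace E] {f : ℕ → E → ℝ} {J : ℕ} {μ : Measure E}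
    {n : ℕ} {B B' : ℝ} (h : GoodPart f J μ n B) (hB : B ≤ B') : GoodPart f J μ n B' := by
  obtain ⟨ν, D, S, h1, h2, h3, h4, h5⟩ := h
  exact ⟨ν, D, S, h1, h2, h3.trans hB, h4, h5⟩

lemma GoodPart.step {E : Type} [MeasurableSpace E] {f : ℕ → E → ℝ} {J : ℕ} {μ : Measure E}
    {n : ℕ} {B : ℝ} (h : GoodPart f J μ n B) {a b : ℝ} (hab : ∀ᵐ x ∂μ, a ≤ f J x ∧ f J x ≤ b) :
    GoodPart f (J + 1) μ n (B + n * (b - a)) := by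
  obtain ⟨ν, D, S, h1, h2, h3, h4, h5⟩ := h
  refine ⟨ν, fun i => D i + (b - a), fun i => S i ∩ {x | a ≤ f J x ∧ f J x ≤ b}, h1, h2, ?_, ?_, ?_⟩
  · rw [Finset.sum_add_distrib]
    simp only [Finset.sum_const, Finset.card_univ, Fintype.card_fin, nsmul_eq_mul]
    linarith
  · intro i
    filter_upwards [h4 i, ae_of_sum_eq h2 hab i] with x hx hx'
    exact ⟨hx, hx'⟩
  · intro i x hx y hy
    rw [Finset.sum_range_succ]
    have e1 := h5 i x hx.1 y hy.1
    have hx2 := hx.2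
    have hy2 := hy.2
    simp only [Set.mem_setOf_eq] at hx2 hy2
    have e2 : |f J x - f J y| ≤ b - a := by
      rw [abs_le]; constructor <;> linarith
    exact add_le_add e1 e2

lemma partition_inner {E : Type} [MeasurableSpace E] (f : ℕ → E → ℝ) (hf : ∀ l, Measurable (f l))
    (a b : ℝ) (m : ℕ) (hm : 0 < m) (J : ℕ) (B : ℝ) (hB : 0 ≤ B)
    (hJ : ∀ (μ : Measure E) (n : ℕ), μ Set.univ = n → n ≤ m ^ J →
      (∀ l < J, ∀ᵐ x ∂μ, a ≤ f l x ∧ f l x ≤ b) → GoodPart f J μ n B) (r : ℕ) :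
    ∀ (μ : Measure E) (n : ℕ) (a' b' : ℝ), μ Set.univ = n → n ≤ r * m ^ J → a' ≤ b' →
      (∀ l < J, ∀ᵐ x ∂μ, a ≤ f l x ∧ f l x ≤ b) → (∀ᵐ x ∂μ, a' ≤ f J x ∧ f J x ≤ b') →
      GoodPart f (J + 1) μ n (r * B + m ^ J * (b' - a')) := by
  induction r with
  | zero =>
    intro μ n a' b' hμ hn hab _ _
    have hn0 : n = 0 := by simpa using hn
    subst hn0
    have hμ0 : μ = 0 := by simpa using hμ
    subst hμ0
    refine ⟨Fin.elim0, Fin.elim0, Fin.elim0, fun i => i.elim0, by simp, ?_, fun i => i.elim0,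
      fun i => i.elim0⟩
    have : 0 ≤ (m : ℝ) ^ J * (b' - a') := mul_nonneg (by positivity) (by linarith)
    simpa using this
  | succ r ih =>
    intro μ n a' b' hμ hn hab hl hJ'
    by_cases hnm : n ≤ m ^ J
    · refine ((hJ μ n hμ hnm hl).step hJ').mono ?_
      have h1 : (n : ℝ) ≤ (m : ℝ) ^ J := by exact_mod_cast hnm
      have h2 : (n : ℝ) * (b' - a') ≤ (m : ℝ) ^ J * (b' - a') :=
        mul_le_mul_of_nonneg_right h1 (by linarith)
      have h3 : 0 ≤ (r : ℝ) * B := by positivity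
      push_cast
      linarith
    · push Not at hnm
      have hfin : IsFiniteMeasure μ := ⟨by rw [hμ]; exact ENNReal.natCast_lt_top n⟩
      obtain ⟨t, μ1, μ2, hat, htb, hsum, hmass, h1, h2⟩ := cut_measure μ (f J) (hf J) a' b' hJ'
        ((m ^ J : ℕ) : ℝ≥0∞) (by exact_mod_cast pow_pos hm J)
        (by rw [hμ]; exact_mod_cast hnm.le)
      obtain ⟨k, rfl⟩ := Nat.exists_eq_add_of_le hnm.le
      have hmass2 : μ2 Set.univ = (k : ℝ≥0∞) := by
        have : μ1 Set.univ + μ2 Set.univ = ((m ^ J + k : ℕ) : ℝ≥0∞) := by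
          rw [← hμ, ← hsum]; rfl
        rw [hmass, Nat.cast_add] at this
        exact (ENNReal.add_right_inj (ENNReal.natCast_ne_top _)).1 this
      have ac1 : ∀ {p : E → Prop}, (∀ᵐ x ∂μ, p x) → ∀ᵐ x ∂μ1, p x := by
        intro p hp; rw [← hsum, ae_add_measure_iff] at hp; exact hp.1
      have ac2 : ∀ {p : E → Prop}, (∀ᵐ x ∂μ, p x) → ∀ᵐ x ∂μ2, p x := by
        intro p hp; rw [← hsum, ae_add_measure_iff] at hp; exact hp.2
      have g1 : GoodPart f (J + 1) μ1 (m ^ J) (B + ((m ^ J : ℕ) : ℝ) * (t - a')) := by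
        refine (hJ μ1 (m ^ J) hmass le_rfl fun l hlJ => ac1 (hl l hlJ)).step ?_
        filter_upwards [ac1 hJ', h1] with x hx hx'
        exact ⟨hx.1, hx'⟩
      have g2 : GoodPart f (J + 1) μ2 k (r * B + m ^ J * (b' - t)) := by
        refine ih μ2 k t b' hmass2 ?_ htb (fun l hlJ => ac2 (hl l hlJ)) ?_
        · rw [add_mul, one_mul] at hn; omega
        · filter_upwards [ac2 hJ', h2] with x hx hx'
          exact ⟨hx', hx.2⟩
      have g := g1.append g2
      rw [hsum] at g
      refine g.mono (le_of_eq ?_)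
      push_cast
      ring

lemma partition_all {E : Type} [MeasurableSpace E] (f : ℕ → E → ℝ) (hf : ∀ l, Measurable (f l))
    (a b : ℝ) (hab : a ≤ b) (m : ℕ) (hm : 0 < m) (J : ℕ) :
    ∀ (μ : Measure E) (n : ℕ), μ Set.univ = n → n ≤ m ^ J →
      (∀ l < J, ∀ᵐ x ∂μ, a ≤ f l x ∧ f l x ≤ b) →
      GoodPart f J μ n (J * (b - a) * m ^ (J - 1)) := by
  induction J with
  | zero =>
    intro μ n hμ hn _
    have hn1 : n = 0 ∨ n = 1 := by simp at hn; omega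
    rcases hn1 with rfl | rfl
    · have hμ0 : μ = 0 := by simpa using hμ
      subst hμ0
      exact ⟨Fin.elim0, Fin.elim0, Fin.elim0, fun i => i.elim0, by simp, by simp, fun i => i.elim0,
        fun i => i.elim0⟩
    · exact ⟨fun _ => μ, fun _ => 0, fun _ => Set.univ, by simpa using hμ, by simp, by simp,
        by simp, by simp⟩
  | succ J ih =>
    intro μ n hμ hn hl
    have hB : 0 ≤ (J : ℝ) * (b - a) * (m : ℝ) ^ (J - 1) :=
      mul_nonneg (mul_nonneg (by positivity) (by linarith)) (by positivity)
    have := partition_inner f hf a b m hm J _ hB ih m μ n a b hμ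
      (by rw [pow_succ] at hn; linarith [mul_comm m (m ^ J)]) hab
      (fun l hlJ => hl l (by omega)) (hl J (by omega))
    refine this.mono (le_of_eq ?_)
    rcases J with _ | J
    · simp
    · simp only [Nat.add_sub_cancel]
      push_cast
      ring


lemma map_pair_pi {E : Type} [MeasurableSpace E] {n : ℕ} (ν : Fin n → Measure E)
    [∀ i, IsProbabilityMeasure (ν i)] {i j : Fin n} (hij : i ≠ j) :
    (Measure.pi ν).map (fun x => (x i, x j)) = (ν i).prod (ν j) := by
  have h := ProbabilityTheory.iIndepFun_pi (μ := ν) (X := fun _ => id)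
    (fun i => aemeasurable_id)
  have h2 := h.indepFun hij
  have h3 := (ProbabilityTheory.indepFun_iff_map_prod_eq_prod_map_map
    (f := fun x : Fin n → E => id (x i)) (g := fun x : Fin n → E => id (x j))
    (measurable_pi_apply i).aemeasurable (measurable_pi_apply j).aemeasurable).1 h2
  have e : ∀ k, (Measure.pi ν).map (fun x => id (x k)) = ν k := fun k =>
    (measurePreserving_eval ν k).map_eq
  rw [e, e] at h3
  exact h3

lemma random_points {d : ℕ} (hd : 0 < d) {N : ℕ}
    (ν : Fin N → Measure (EuclideanSpace ℝ (Fin (d + 1)))) (D : Fin N → ℝ)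
    (S : Fin N → Set (EuclideanSpace ℝ (Fin (d + 1))))
    (h1 : ∀ i, ν i Set.univ = 1) (h2 : ∑ i, ν i = (N : ℝ≥0∞) • sigmaMeasure d)
    (h4 : ∀ i, ∀ᵐ x ∂(ν i), x ∈ S i)
    (h5 : ∀ i, ∀ x ∈ S i, ∀ y ∈ S i, ‖x - y‖ ≤ D i)
    (hsph : ∀ i, ∀ᵐ x ∂(ν i), x ∈ sphere (0 : EuclideanSpace ℝ (Fin (d + 1))) 1) :
    ∃ x : Fin N → EuclideanSpace ℝ (Fin (d + 1)),
      (∀ k, x k ∈ sphere (0 : EuclideanSpace ℝ (Fin (d + 1))) 1) ∧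
      (N : ℝ) ^ 2 * avgDist d - ∑ i, D i ≤ ∑ i, ∑ j, ‖x i - x j‖ := by
  have : ∀ i, IsProbabilityMeasure (ν i) := fun i => ⟨h1 i⟩
  have := sigma_prob hd
  set I : Fin N → Fin N → ℝ := fun i j => ∫ x, ∫ y, ‖x - y‖ ∂(ν j) ∂(ν i) with hI
  have hle : ∀ x ∈ sphere (0 : EuclideanSpace ℝ (Fin (d + 1))) 1,
      ∀ y ∈ sphere (0 : EuclideanSpace ℝ (Fin (d + 1))) 1, ‖x - y‖ ≤ 2 := by
    intro x hx y hy
    have hx' : ‖x‖ = 1 := by simpa using hx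
    have hy' : ‖y‖ = 1 := by simpa using hy
    have := norm_sub_le x y
    linarith
  have hπ : ∀ i, ∀ᵐ x ∂(Measure.pi ν), x i ∈ sphere (0 : EuclideanSpace ℝ (Fin (d + 1))) 1 :=
    fun i => (Measure.tendsto_eval_ae_ae (μ := ν) (i := i)).eventually (hsph i)
  have hInt0 : ∀ i j, Integrable (fun x : Fin N → EuclideanSpace ℝ (Fin (d + 1)) => ‖x i - x j‖)
      (Measure.pi ν) := by
    intro i j
    refine Integrable.of_bound (by fun_prop) 2 ?_
    filter_upwards [hπ i, hπ j] with x hx hy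
    rw [norm_norm]
    exact hle _ hx _ hy
  have hyint : ∀ j, ∀ x ∈ sphere (0 : EuclideanSpace ℝ (Fin (d + 1))) 1,
      Integrable (fun y => ‖x - y‖) (ν j) := by
    intro j x hx
    refine Integrable.of_bound (by fun_prop) 2 ?_
    filter_upwards [hsph j] with y hy
    rw [norm_norm]
    exact hle _ hx _ hy
  have hpint : ∀ i j, Integrable (fun p : EuclideanSpace ℝ (Fin (d + 1)) ×
      EuclideanSpace ℝ (Fin (d + 1)) => ‖p.1 - p.2‖) ((ν i).prod (ν j)) := by
    intro i j
    refine Integrable.of_bound (by fun_prop) 2 ?_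
    have a1 : ∀ᵐ p ∂((ν i).prod (ν j)), p.1 ∈ sphere (0 : EuclideanSpace ℝ (Fin (d + 1))) 1 :=
      Measure.quasiMeasurePreserving_fst.ae (hsph i)
    have a2 : ∀ᵐ p ∂((ν i).prod (ν j)), p.2 ∈ sphere (0 : EuclideanSpace ℝ (Fin (d + 1))) 1 :=
      Measure.quasiMeasurePreserving_snd.ae (hsph j)
    filter_upwards [a1, a2] with p hx hy
    rw [norm_norm]
    exact hle _ hx _ hy
  have hpair : ∀ i j, i ≠ j → ∫ x, ‖x i - x j‖ ∂(Measure.pi ν) = I i j := by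
    intro i j hij
    have e1 : ∫ x, ‖x i - x j‖ ∂(Measure.pi ν) =
        ∫ p, ‖p.1 - p.2‖ ∂((Measure.pi ν).map (fun x => (x i, x j))) := by
      rw [integral_map (by fun_prop) (by fun_prop)]
    rw [e1, map_pair_pi ν hij, integral_prod _ (hpint i j)]
  have hdiag : ∀ i, I i i ≤ D i := by
    intro i
    have b1 : ∀ᵐ x ∂(ν i), ∫ y, ‖x - y‖ ∂(ν i) ≤ D i := by
      filter_upwards [hsph i, h4 i] with x hx hxS
      calc ∫ y, ‖x - y‖ ∂(ν i) ≤ ∫ y, D i ∂(ν i) := by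
            refine integral_mono_ae (hyint i x hx) (integrable_const _) ?_
            filter_upwards [h4 i] with y hy
            exact h5 i x hxS y hy
        _ = D i := by simp
    calc I i i ≤ ∫ x, D i ∂(ν i) :=
          integral_mono_ae (hpint i i).integral_prod_left (integrable_const _) b1
      _ = D i := by simp
  have hsum : ∑ i, ∑ j, I i j = (N : ℝ) ^ 2 * avgDist d := by
    have c1 : ∀ i, ∑ j, I i j = N * avgDist d := by
      intro i
      rw [hI]
      simp only
      rw [← integral_finsetSum _ (fun j _ => (hpint i j).integral_prod_left)]
      have : ∀ᵐ x ∂(ν i), ∑ j, ∫ y, ‖x - y‖ ∂(ν j) = N * avgDist d := by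
        filter_upwards [hsph i] with x hx
        rw [← integral_finsetSum_measure (fun j _ => hyint j x hx), h2, integral_smul_measure,
          avgDist_eq hx]
        simp
      rw [integral_congr_ae this]
      simp
    simp only [c1]
    simp
    ring
  have hFint : Integrable (fun x : Fin N → EuclideanSpace ℝ (Fin (d + 1)) =>
      ∑ i, ∑ j, ‖x i - x j‖) (Measure.pi ν) :=
    integrable_finsetSum _ fun i _ => integrable_finsetSum _ fun j _ => hInt0 i j
  have hF : (N : ℝ) ^ 2 * avgDist d - ∑ i, D i ≤
      ∫ x, ∑ i, ∑ j, ‖x i - x j‖ ∂(Measure.pi ν) := by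
    rw [integral_finsetSum _ (fun i _ => integrable_finsetSum _ fun j _ => hInt0 i j), ← hsum,
      ← Finset.sum_sub_distrib]
    refine Finset.sum_le_sum fun i _ => ?_
    rw [integral_finsetSum _ (fun j _ => hInt0 i j)]
    have : ∑ j, I i j - D i ≤ ∑ j, (I i j - if j = i then D i else 0) := by
      rw [Finset.sum_sub_distrib]
      simp
    refine this.trans (Finset.sum_le_sum fun j _ => ?_)
    by_cases hj : j = i
    · subst hj
      have := hdiag j
      simpa using this
    · simp [hj, hpair i j (Ne.symm hj)]
  have hall : ∀ᵐ x ∂(Measure.pi ν), ∀ k, x k ∈ sphere (0 : EuclideanSpace ℝ (Fin (d + 1))) 1 :=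
    ae_all_iff.2 hπ
  obtain ⟨x, hx, hx2⟩ := exists_notMem_null_integral_le hFint (ae_iff.1 hall)
  refine ⟨x, ?_, hF.trans hx2⟩
  simpa using hx

lemma energy_upper {d : ℕ} (hd : 0 < d) : ∃ C : ℝ, 0 < C ∧ ∀ N : ℕ, 0 < N →
    ∃ x : Fin N → EuclideanSpace ℝ (Fin (d + 1)),
      (∀ k, x k ∈ sphere (0 : EuclideanSpace ℝ (Fin (d + 1))) 1) ∧
      avgDist d - (∑ i, ∑ j, ‖x i - x j‖) / (N : ℝ) ^ 2 ≤ C * (N : ℝ) ^ (-1 - 1 / (d : ℝ)) := by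
  have hd' : (0 : ℝ) < d := by exact_mod_cast hd
  refine ⟨2 * (d * 5 * 2 ^ (d - 1)), by positivity, fun N hN => ?_⟩
  have hN1 : (1 : ℝ) ≤ N := by exact_mod_cast hN
  have hN0 : (0 : ℝ) < N := by linarith
  have := sigma_prob hd
  set r : ℝ := (N : ℝ) ^ (1 / (d : ℝ)) with hr
  have hr1 : 1 ≤ r := Real.one_le_rpow hN1 (by positivity)
  have hrd : r ^ d = N := by
    rw [hr, ← Real.rpow_natCast, ← Real.rpow_mul hN0.le]
    rw [one_div, inv_mul_cancel₀ hd'.ne', Real.rpow_one]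
  set m : ℕ := ⌈r⌉₊ with hm
  have hm0 : 0 < m := Nat.ceil_pos.2 (by linarith)
  have hmr : r ≤ m := Nat.le_ceil r
  have hm2 : (m : ℝ) ≤ 2 * r := by
    have := Nat.ceil_lt_add_one (show 0 ≤ r by linarith)
    linarith
  have hNm : N ≤ m ^ d := by
    have : (N : ℝ) ≤ (m : ℝ) ^ d := by
      rw [← hrd]
      exact pow_le_pow_left₀ (by linarith) hmr d
    exact_mod_cast this
  set f : ℕ → EuclideanSpace ℝ (Fin (d + 1)) → ℝ :=
    fun l x => if h : l < d then chartMap d x ⟨l, h⟩ else 0 with hf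
  have hfm : ∀ l, Measurable (f l) := by
    intro l
    by_cases h : l < d
    · simp only [hf, h, dite_true]
      exact measurable_chartMap d ⟨l, h⟩
    · simp only [hf, h, dite_false]
      exact measurable_const
  have hsphN : ∀ᵐ x ∂((N : ℝ≥0∞) • sigmaMeasure d),
      x ∈ sphere (0 : EuclideanSpace ℝ (Fin (d + 1))) 1 :=
    Measure.ae_smul_measure (sigma_ae_mem d) _
  obtain ⟨ν, D, S, h1, h2, h3, h4, h5⟩ := partition_all f hfm (-1) 4 (by norm_num) m hm0 d
    ((N : ℝ≥0∞) • sigmaMeasure d) N (by simp) hNm (by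
      intro l hl
      filter_upwards [hsphN] with x hx
      simp only [hf, hl, dite_true]
      exact chartMap_mem hx _)
  have hsph := fun i => ae_of_sum_eq h2 hsphN i
  obtain ⟨x, hx, hx2⟩ := random_points hd ν (fun i => 2 * D i)
    (fun i => S i ∩ sphere (0 : EuclideanSpace ℝ (Fin (d + 1))) 1) h1 h2 (by
      intro i
      filter_upwards [h4 i, hsph i] with x hx hx'
      exact ⟨hx, hx'⟩) (by
      intro i x hx y hy
      refine (chartMap_dist hd hx.2 hy.2).trans ?_
      refine mul_le_mul_of_nonneg_left ?_ (by norm_num)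
      refine le_trans (le_of_eq ?_) (h5 i x hx.1 y hy.1)
      rw [Finset.sum_range]
      refine Finset.sum_congr rfl fun j _ => ?_
      simp [hf]) hsph
  refine ⟨x, hx, ?_⟩
  rw [← Finset.mul_sum] at hx2
  have hpow : (m : ℝ) ^ (d - 1) ≤ 2 ^ (d - 1) * r ^ (d - 1) := by
    rw [← mul_pow]
    exact pow_le_pow_left₀ (by positivity) hm2 _
  have hrr : r ^ (d - 1) = (N : ℝ) ^ 2 * (N : ℝ) ^ (-1 - 1 / (d : ℝ)) := by
    have hr0 : r ≠ 0 := by linarith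
    have e1 : r ^ (d - 1) = N / r := by
      rw [eq_div_iff hr0, ← hrd, ← pow_succ, Nat.sub_add_cancel hd]
    rw [e1, hr, ← Real.rpow_natCast, ← Real.rpow_add hN0, div_eq_iff (by positivity),
      ← Real.rpow_add hN0]
    have e2 : ((2 : ℕ) : ℝ) + (-1 - 1 / (d : ℝ)) + 1 / (d : ℝ) = 1 := by
      push_cast
      ring
    rw [e2, Real.rpow_one]
  have key : (N : ℝ) ^ 2 * avgDist d - ∑ i, ∑ j, ‖x i - x j‖ ≤
      (2 * (d * 5 * 2 ^ (d - 1)) * (N : ℝ) ^ (-1 - 1 / (d : ℝ))) * (N : ℝ) ^ 2 := by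
    have q1 : ∑ i, D i ≤ d * 5 * (2 ^ (d - 1) * r ^ (d - 1)) := by
      refine h3.trans ?_
      have : (4 : ℝ) - -1 = 5 := by norm_num
      rw [this]
      exact mul_le_mul_of_nonneg_left hpow (by positivity)
    rw [hrr] at q1
    nlinarith [q1, hx2]
  have e : avgDist d - (∑ i, ∑ j, ‖x i - x j‖) / (N : ℝ) ^ 2 =
      ((N : ℝ) ^ 2 * avgDist d - ∑ i, ∑ j, ‖x i - x j‖) / (N : ℝ) ^ 2 := by
    field_simp
  rw [e, div_le_iff₀ (by positivity)]
  exact key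


/-- For `d ≥ 2` there are constants `c′, C′ > 0` such that for all sufficiently large `N`,
`c′ · N^{−1/2 − 1/(2d)} ≤ D_{L2,C}(S^d; N) ≤ C′ · N^{−1/2 − 1/(2d)}`. -/
theorem optL2Disc_asymptotic_order (d : ℕ) (hd : 2 ≤ d) :
    ∃ c' C' : ℝ, 0 < c' ∧ 0 < C' ∧ ∀ᶠ N : ℕ in atTop,
      c' * (N : ℝ) ^ (-(1 : ℝ) / 2 - 1 / (2 * d)) ≤ optL2Disc d N ∧
      optL2Disc d N ≤ C' * (N : ℝ) ^ (-(1 : ℝ) / 2 - 1 / (2 * d)) := by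
  have hd0 : 0 < d := by omega
  have hk := kap_pos hd0
  obtain ⟨c, hc, hlow⟩ := energy_lower hd0
  obtain ⟨C, hC, hup⟩ := energy_upper hd0
  refine ⟨√(kap d * c), √(kap d * C), by positivity, by positivity, ?_⟩
  filter_upwards [eventually_gt_atTop 0] with N hN
  have hN0 : (0 : ℝ) < N := by exact_mod_cast hN
  have hs : (N : ℝ) ^ (-(1 : ℝ) / 2 - 1 / (2 * d)) = √((N : ℝ) ^ (-1 - 1 / (d : ℝ))) := by
    rw [Real.sqrt_eq_rpow, ← Real.rpow_mul hN0.le]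
    congr 1
    have : (d : ℝ) ≠ 0 := by positivity
    field_simp
  rw [hs, ← Real.sqrt_mul (by positivity), ← Real.sqrt_mul (by positivity)]
  constructor
  · have : Nonempty {x : Fin N → EuclideanSpace ℝ (Fin (d + 1)) //
        ∀ k, x k ∈ sphere (0 : EuclideanSpace ℝ (Fin (d + 1))) 1} :=
      ⟨⟨fun _ => EuclideanSpace.single 0 1, fun k => by simp⟩⟩
    refine le_ciInf fun x => Real.sqrt_le_sqrt ?_
    rw [stolarsky hd0 N hN x.1 x.2, mul_assoc]
    exact mul_le_mul_of_nonneg_left (hlow N hN x.1 x.2) hk.le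
  · obtain ⟨x, hx, hx2⟩ := hup N hN
    have hb : BddBelow (Set.range fun x : {x : Fin N → EuclideanSpace ℝ (Fin (d + 1)) //
        ∀ k, x k ∈ sphere (0 : EuclideanSpace ℝ (Fin (d + 1))) 1} => L2Disc d N x.1) :=
      ⟨0, by rintro _ ⟨y, rfl⟩; exact Real.sqrt_nonneg _⟩
    refine (ciInf_le hb ⟨x, hx⟩).trans (Real.sqrt_le_sqrt ?_)
    simp only
    rw [stolarsky hd0 N hN x hx, mul_assoc]
    exact mul_le_mul_of_nonneg_left hx2 hk.le
end
end
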